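/- arXiv:1805.09956 — 3 statements merged into one kernel-verified Lean document; each statement's English description precedes it below -/
import Mathlib

section
/- Let G be the ℓ×ℓ grid graph with n = ℓ² vertices, where log₂ n ≥ 2²⁷. Let M be a set of demand pairs all of whose sources lie on the top row R* of G, let d ≥ 1 be an integer, and let Q be a d-canonical family of squares of G none of whose squares intersects R*. Let M̂ ⊆ M be a subset of demand pairs such that (i) there is a set of pairwise node-disjoint paths in G routing all demand pairs of M̂, and (ii) for every (s,t) ∈ M̂ there is a square Q ∈ Q with t ∈ Q. Then there exists a subset M̂' ⊆ M̂ with |M̂'| ≥ |M̂|/(log₂ n)⁶ such that every square Q ∈ Q has the 1-shadow property with respect to M̂'. -/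
/-!
The paths of a routing are disjoint, so planarity restricts how the sources of two squares can
interleave on the top row. If sources `a < b < c < e` belong alternately to the squares `Q` and
`R`, then one of the four paths enters the square it does not belong to: otherwise the paths of `a`
and `c` joined inside `Q`, and those of `b` and `e` joined inside `R`, would be disjoint, which is
impossible by counting crossings with vertical rays modulo 2. As a path enters a square through
its perimeter, at most `4 * d` paths enter a square of side `d`.

With `L = ⌊log₂ ℓ⌋`, a factor `L + 1` is lost by keeping only squares whose numbers of sources lie
in one dyadic range; let `h` be about a sixth of its lower end. Rank the sources from left to right
and cut the ranks into blocks of length `192 * (L + 1) * d`. A square with `h` sources in one block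
keeps those. Any other square is cut into three parts, with `h` sources each, by two block
boundaries whose distance is a power of two, and there are few such pairs of boundaries. Two
squares cut by the same pair alternate robustly, so the paths of one meet the other at least `h`
times in total; double counting these incidences, one pair serves at most `8 * d / h` squares, and
the squares of the second kind are at most half of all. Keeping only one residue class of ranks
modulo `192 * (L + 1)` leaves at most `d` sources in each block, hence in each shadow. The total
loss is the factor `4608 * (L + 1) ^ 2`, at most `(log₂ n) ^ 6`.
-/

open Finset

abbrev Vtx := ℕ × ℕ
abbrev DPair := Vtx × Vtx

/-- The grid graph on rows `r₁..r₂` and columns `c₁..c₂` (vertices outside are isolated). -/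
def rectGrid (r₁ r₂ c₁ c₂ : ℕ) : SimpleGraph Vtx :=
  SimpleGraph.fromRel (fun u v =>
    r₁ ≤ u.1 ∧ u.1 ≤ r₂ ∧ c₁ ≤ u.2 ∧ u.2 ≤ c₂ ∧
    r₁ ≤ v.1 ∧ v.1 ≤ r₂ ∧ c₁ ≤ v.2 ∧ v.2 ≤ c₂ ∧
    ((u.1 = v.1 ∧ u.2 + 1 = v.2) ∨ (u.2 = v.2 ∧ u.1 + 1 = v.1)))

/-- The ℓ×ℓ grid graph. -/
def gridG (ℓ : ℕ) : SimpleGraph Vtx := rectGrid 1 ℓ 1 ℓ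

/-- The demand pairs of `M` can be simultaneously routed via node-disjoint paths in `G`. -/
def NodeDisjointRoutable {V : Type*} (G : SimpleGraph V) (M : Finset (V × V)) : Prop :=
  ∃ P : ∀ m : {m // m ∈ M}, G.Walk m.val.1 m.val.2,
    (∀ m, (P m).IsPath) ∧
    ∀ m m' : {m // m ∈ M}, m ≠ m' → ∀ x, x ∈ (P m).support → x ∉ (P m').support

def OnTopRow (ℓ : ℕ) (v : Vtx) : Prop := v.1 = 1 ∧ 1 ≤ v.2 ∧ v.2 ≤ ℓ

def OnBoundary (ℓ : ℕ) (v : Vtx) : Prop :=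
  1 ≤ v.1 ∧ v.1 ≤ ℓ ∧ 1 ≤ v.2 ∧ v.2 ≤ ℓ ∧ (v.1 = 1 ∨ v.1 = ℓ ∨ v.2 = 1 ∨ v.2 = ℓ)

def DistinctSources (M : Finset DPair) : Prop := ∀ m ∈ M, ∀ m' ∈ M, m.1 = m'.1 → m = m'
def DistinctDests (M : Finset DPair) : Prop := ∀ m ∈ M, ∀ m' ∈ M, m.2 = m'.2 → m = m'

noncomputable def lg (n : ℕ) : ℝ := Real.logb 2 n

def IsIntervalIn (W : ℕ) (I : Finset ℕ) : Prop :=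
  ∃ a b : ℕ, 1 ≤ a ∧ a ≤ b ∧ b ≤ W ∧ I = Finset.Icc a b

def IntSeparated (d : ℕ) (I J : Finset ℕ) : Prop :=
  ∀ i ∈ I, ∀ j ∈ J, (d : ℤ) < |(i : ℤ) - (j : ℤ)|

def IsCanonicalIntervals (W d : ℕ) (Is : Finset (Finset ℕ)) : Prop :=
  (∀ I ∈ Is, IsIntervalIn W I ∧ I.card = d) ∧
    ∀ I ∈ Is, ∀ J ∈ Is, I ≠ J → IntSeparated d I J

abbrev SquareSpec := Finset ℕ × Finset ℕ

def memSquare (v : Vtx) (Q : SquareSpec) : Prop := v.1 ∈ Q.1 ∧ v.2 ∈ Q.2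

instance (v : Vtx) (Q : SquareSpec) : Decidable (memSquare v Q) := by
  unfold memSquare; infer_instance

def IsCanonicalSquares (W d : ℕ) (Qs : Finset SquareSpec) : Prop :=
  ∃ I₁ I₂ : Finset (Finset ℕ),
    IsCanonicalIntervals W d I₁ ∧ IsCanonicalIntervals W d I₂ ∧ Qs = I₁ ×ˢ I₂

/-- The number of sources of `M` lying on the shadow of the square `Q` with respect to `M`,
i.e. on the shortest sub-path of the top row containing all sources of pairs of `M` whose
destination lies in `Q`. -/
def shadowCount (M : Finset DPair) (Q : SquareSpec) : ℕ :=
  (M.filter (fun m => ∃ m₁ ∈ M, memSquare m₁.2 Q ∧ ∃ m₂ ∈ M, memSquare m₂.2 Q ∧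
      m₁.1.2 ≤ m.1.2 ∧ m.1.2 ≤ m₂.1.2)).card

/-- The square `Q` (of side `d`) has the β-shadow property with respect to `M`. -/
def HasShadowProp (β : ℝ) (d : ℕ) (M : Finset DPair) (Q : SquareSpec) : Prop :=
  (shadowCount M Q : ℝ) ≤ β * d

/-! ### Robust alternation -/

section Alternation

variable {α : Type*} {A B D : Finset α} {g : α → ℕ} {p q h : ℕ}

/-- The separators `p` and `q` cut `A`, whose elements are placed on a line by `g`, into three
parts with at least `h` elements each. -/
structure CutInThree (g : α → ℕ) (p q h : ℕ) (A : Finset α) : Prop where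
  left : h ≤ #{a ∈ A | g a < p}
  middle : h ≤ #{a ∈ A | p ≤ g a ∧ g a < q}
  right : h ≤ #{a ∈ A | q ≤ g a}

lemma CutInThree.mono {h' : ℕ} (hh : h' ≤ h) (hA : CutInThree g p q h A) :
    CutInThree g p q h' A :=
  ⟨hh.trans hA.left, hh.trans hA.middle, hh.trans hA.right⟩

lemma CutInThree.exists_mem (hA : CutInThree g p q 1 A) :
    (∃ a ∈ A, g a < p) ∧ (∃ a ∈ A, p ≤ g a ∧ g a < q) ∧ ∃ a ∈ A, q ≤ g a := by
  simp only [← filter_nonempty_iff, ← one_le_card]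
  exact ⟨hA.left, hA.middle, hA.right⟩

lemma le_card_filter_sdiff_add_card_inter [DecidableEq α] {P : α → Prop} [DecidablePred P]
    (hA : h ≤ #{a ∈ A | P a}) : h ≤ #{a ∈ A \ D | P a} + #(A ∩ D) := by
  refine hA.trans ((card_le_card fun a ha => ?_).trans (card_union_le _ _))
  simp only [mem_union, mem_filter, mem_sdiff, mem_inter] at ha ⊢
  tauto

lemma CutInThree.sdiff [DecidableEq α] (hA : CutInThree g p q (h + #(A ∩ D)) A) :
    CutInThree g p q h (A \ D) where
  left := Nat.add_le_add_iff_right.mp (le_card_filter_sdiff_add_card_inter hA.left)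
  middle := Nat.add_le_add_iff_right.mp (le_card_filter_sdiff_add_card_inter hA.middle)
  right := Nat.add_le_add_iff_right.mp (le_card_filter_sdiff_add_card_inter hA.right)

variable [LinearOrder α]

/-- Two elements of `A` and two of `B` occur in the order `A`, `B`, `A`, `B`. -/
def Alternates (A B : Finset α) : Prop :=
  ∃ a ∈ A, ∃ b ∈ B, ∃ c ∈ A, ∃ e ∈ B, a < b ∧ b < c ∧ c < e

lemma Alternates.mono {A A' B B' : Finset α} (hA : A ⊆ A') (hB : B ⊆ B') (h : Alternates A B) :
    Alternates A' B' := by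
  obtain ⟨a, ha, b, hb, c, hc, e, he, hlt⟩ := h
  exact ⟨a, hA ha, b, hB hb, c, hA hc, e, hB he, hlt⟩

lemma CutInThree.alternates_or_alternates (hg : Monotone g) (hAB : Disjoint A B)
    (hA : CutInThree g p q 1 A) (hB : CutInThree g p q 1 B) :
    Alternates A B ∨ Alternates B A := by
  obtain ⟨⟨a₁, ha₁, hpa₁⟩, ⟨a₂, ha₂, hpa₂, hqa₂⟩, a₃, ha₃, hqa₃⟩ := hA.exists_mem
  obtain ⟨⟨b₁, hb₁, hpb₁⟩, ⟨b₂, hb₂, hpb₂, hqb₂⟩, b₃, hb₃, hqb₃⟩ := hB.exists_mem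
  have ha₁b₂ : a₁ < b₂ := hg.reflect_lt (hpa₁.trans_le hpb₂)
  have hb₁a₂ : b₁ < a₂ := hg.reflect_lt (hpb₁.trans_le hpa₂)
  have ha₂b₃ : a₂ < b₃ := hg.reflect_lt (hqa₂.trans_le hqb₃)
  have hb₂a₃ : b₂ < a₃ := hg.reflect_lt (hqb₂.trans_le hqa₃)
  -- Whichever of the two leftmost elements comes first starts the alternation.
  rcases lt_or_gt_of_ne (disjoint_iff_ne.mp hAB a₁ ha₁ b₁ hb₁) with h | h
  · exact .inl ⟨a₁, ha₁, b₁, hb₁, a₂, ha₂, b₃, hb₃, h, hb₁a₂, ha₂b₃⟩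
  · exact .inr ⟨b₁, hb₁, a₁, ha₁, b₂, hb₂, a₃, ha₃, h, ha₁b₂, hb₂a₃⟩

end Alternation

/-! ### Planar systems of paths -/

section PlanarSystem

variable {α σ : Type*} [DecidableEq σ] {S T : Finset α} {sq : α → σ} {met : σ → Finset α}
  {k h p q : ℕ} {g : α → ℕ}

/-- The sources, among those in `S`, whose paths end in the square `Q`; the path of `c` ends in
`sq c`. -/
def sourcesOf (S : Finset α) (sq : α → σ) (Q : σ) : Finset α := {c ∈ S | sq c = Q}

@[simp]
lemma mem_sourcesOf {Q : σ} {c : α} : c ∈ sourcesOf S sq Q ↔ c ∈ S ∧ sq c = Q :=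
  mem_filter

lemma sourcesOf_subset_sourcesOf (hTS : T ⊆ S) (Q : σ) : sourcesOf T sq Q ⊆ sourcesOf S sq Q :=
  filter_subset_filter _ hTS

lemma disjoint_sourcesOf {Q R : σ} (hQR : Q ≠ R) :
    Disjoint (sourcesOf S sq Q) (sourcesOf S sq R) :=
  disjoint_filter.mpr fun _ _ hQ hR => hQR (hQ.symm.trans hR)

variable [LinearOrder α]

/-- The elements of `S` on the shadow of `Q` with respect to `S`. -/
def sourceShadow (S : Finset α) (sq : α → σ) (Q : σ) : Finset α :=
  {c ∈ S | ∃ a ∈ sourcesOf S sq Q, ∃ b ∈ sourcesOf S sq Q, a ≤ c ∧ c ≤ b}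

/-- The combinatorial trace of a routing by disjoint paths: `S` is the ordered set of sources, the
path of `c` ends in the square `sq c`, and `met Q` contains the sources whose paths meet `Q`. -/
structure IsPlanarSystem (S : Finset α) (sq : α → σ) (met : σ → Finset α) (k : ℕ) : Prop where
  mem_met : ∀ c ∈ S, c ∈ met (sq c)
  card_met_le : ∀ c ∈ S, #(met (sq c)) ≤ k
  not_alternates : ∀ Q R, Q ≠ R →
    ¬ Alternates (sourcesOf S sq Q \ met R) (sourcesOf S sq R \ met Q)

namespace IsPlanarSystem

lemma mono (hS : IsPlanarSystem S sq met k) (hTS : T ⊆ S) : IsPlanarSystem T sq met k where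
  mem_met c hc := hS.mem_met c (hTS hc)
  card_met_le c hc := hS.card_met_le c (hTS hc)
  not_alternates Q R hQR halt := hS.not_alternates Q R hQR <|
    halt.mono (sdiff_subset_sdiff (sourcesOf_subset_sourcesOf hTS Q) subset_rfl)
      (sdiff_subset_sdiff (sourcesOf_subset_sourcesOf hTS R) subset_rfl)

lemma le_card_met_inter_add_card_met_inter (hS : IsPlanarSystem S sq met k) (hg : Monotone g)
    {Q R : σ} (hQ : CutInThree g p q h (sourcesOf S sq Q))
    (hR : CutInThree g p q h (sourcesOf S sq R)) :
    h ≤ #(sourcesOf S sq Q ∩ met R) + #(sourcesOf S sq R ∩ met Q) := by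
  by_cases hQR : Q = R
  · subst hQR
    have hsub : sourcesOf S sq Q ⊆ met Q := fun c hc => by
      obtain ⟨hcS, rfl⟩ := mem_sourcesOf.mp hc
      exact hS.mem_met c hcS
    rw [inter_eq_left.mpr hsub]
    exact (hQ.left.trans (card_filter_le _ _)).trans (Nat.le_add_right _ _)
  by_contra! hlt
  have hQ' := (hQ.mono (by omega : 1 + #(sourcesOf S sq Q ∩ met R) ≤ h)).sdiff
  have hR' := (hR.mono (by omega : 1 + #(sourcesOf S sq R ∩ met Q) ≤ h)).sdiff
  have hdisj := (disjoint_sourcesOf (S := S) (sq := sq) hQR).mono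
    (sdiff_subset (t := met R)) (sdiff_subset (t := met Q))
  exact (hQ'.alternates_or_alternates hg hdisj hR').elim
    (hS.not_alternates Q R hQR) (hS.not_alternates R Q (Ne.symm hQR))

lemma sum_card_sourcesOf_inter_met_le (hS : IsPlanarSystem S sq met k) (F : Finset σ) {R : σ}
    (hR : R ∈ S.image sq) : ∑ Q ∈ F, #(sourcesOf S sq Q ∩ met R) ≤ k := by
  obtain ⟨c, hc, rfl⟩ := mem_image.mp hR
  calc ∑ Q ∈ F, #(sourcesOf S sq Q ∩ met (sq c))
      = ∑ Q ∈ F, #{a ∈ S ∩ met (sq c) | sq a = Q} := by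
        simp only [sourcesOf, filter_inter]
    _ = #{a ∈ S ∩ met (sq c) | sq a ∈ F} := sum_card_fiberwise_eq_card_filter _ _ _
    _ ≤ #(met (sq c)) := card_le_card ((filter_subset _ _).trans inter_subset_right)
    _ ≤ k := hS.card_met_le c hc

/-- Any two squares of `F` account for `h` incidences between a path and a square it meets, while a
single square is responsible for at most `k` of them. -/
lemma mul_card_le_of_cutInThree (hS : IsPlanarSystem S sq met k) (hg : Monotone g) {F : Finset σ}
    (hF : F ⊆ S.image sq) (hcut : ∀ Q ∈ F, CutInThree g p q h (sourcesOf S sq Q)) :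
    h * #F ≤ 2 * k := by
  set I : σ → σ → ℕ := fun Q R => #(sourcesOf S sq Q ∩ met R)
  have hpairs : (h * #F) * #F ≤ (2 * k) * #F :=
    calc (h * #F) * #F = ∑ _Q ∈ F, ∑ _R ∈ F, h := by
          simp only [sum_const, smul_eq_mul]; ring
      _ ≤ ∑ Q ∈ F, ∑ R ∈ F, (I Q R + I R Q) := sum_le_sum fun Q hQ => sum_le_sum fun R hR =>
          hS.le_card_met_inter_add_card_met_inter hg (hcut Q hQ) (hcut R hR)
      _ = 2 * ∑ R ∈ F, ∑ Q ∈ F, I Q R := by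
          simp only [sum_add_distrib]
          rw [sum_comm, two_mul]
      _ ≤ 2 * ∑ _R ∈ F, k := Nat.mul_le_mul_left _ <| sum_le_sum fun R hR =>
          hS.sum_card_sourcesOf_inter_met_le F (hF hR)
      _ = (2 * k) * #F := by simp only [sum_const, smul_eq_mul]; ring
  rcases (#F).eq_zero_or_pos with hF0 | hF0
  · simp [hF0]
  · exact Nat.le_of_mul_le_mul_right hpairs hF0

end IsPlanarSystem

end PlanarSystem

/-! ### Few separators suffice -/

/-- The two windows of length `2 ^ u`, maximal with that form, at the two ends of the range where
`c` is between `h` and `T - h` cover this range, so one of them carries half of its weight. -/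
lemma exists_window_of_monotone {c : ℕ → ℕ} (hc : Monotone c) {N h T : ℕ} (h0 : c 0 = 0)
    (hT : T ≤ c (N + 1)) (hh : 1 ≤ h) (hhT : 6 * h ≤ T + 5) (hjump : ∀ t, c (t + 1) < c t + h) :
    ∃ p u, p + 2 ^ u ≤ N ∧ h ≤ c p ∧ c p + h ≤ c (p + 2 ^ u) ∧ c (p + 2 ^ u) + h ≤ T := by
  obtain ⟨s, hs, hs'⟩ : ∃ s, ¬ h ≤ c s ∧ h ≤ c (s + 1) :=
    Nat.exists_not_and_succ_of_not_zero_of_exists (by omega) ⟨N + 1, by omega⟩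
  obtain ⟨t, ht, ht'⟩ : ∃ t, ¬ T < c t + h ∧ T < c (t + 1) + h :=
    Nat.exists_not_and_succ_of_not_zero_of_exists (p := fun t => T < c t + h) (by omega)
      ⟨N + 1, by omega⟩
  have hjs := hjump s
  have hjt := hjump t
  have hst : s + 1 < t := hc.reflect_lt (by omega)
  have htN : t < N + 1 := hc.reflect_lt (by omega)
  set u := Nat.log 2 (t - (s + 1))
  have hu : 2 ^ u ≤ t - (s + 1) := Nat.pow_log_le_self 2 (by omega)
  have hu' : t - (s + 1) < 2 ^ u * 2 := Nat.lt_pow_succ_log_self one_lt_two _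
  by_cases hfirst : c (s + 1) + h ≤ c (s + 1 + 2 ^ u)
  · have : c (s + 1 + 2 ^ u) ≤ c t := hc (by omega)
    exact ⟨s + 1, u, by omega, hs', hfirst, by omega⟩
  · have hcover : c (t - 2 ^ u) ≤ c (s + 1 + 2 ^ u) := hc (by omega)
    have hleft : c (s + 1) ≤ c (t - 2 ^ u) := hc (by omega)
    refine ⟨t - 2 ^ u, u, ?_⟩
    rw [Nat.sub_add_cancel (by omega)]
    omega

section Separators

variable {α : Type*} {A : Finset α} {g : α → ℕ} {N h : ℕ}

/-- Some `h` elements of `A` are placed in the same block by `g`. -/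
def IsConcentrated (g : α → ℕ) (h : ℕ) (A : Finset α) : Prop := ∃ v, h ≤ #{a ∈ A | g a = v}

lemma card_filter_lt_add_card_filter (g : α → ℕ) (A : Finset α) {p q : ℕ} (hpq : p ≤ q) :
    #{a ∈ A | g a < p} + #{a ∈ A | p ≤ g a ∧ g a < q} = #{a ∈ A | g a < q} := by
  rw [← card_filter_add_card_filter_not (s := {a ∈ A | g a < q}) (fun a => g a < p),
    filter_filter, filter_filter]
  congr 2 <;> ext a <;> grind

lemma exists_cutInThree_of_not_isConcentrated (hgN : ∀ a ∈ A, g a ≤ N) (hh : 1 ≤ h)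
    (hA : 6 * h ≤ #A + 5) (hspread : ¬ IsConcentrated g h A) :
    ∃ p u, p + 2 ^ u ≤ N ∧ CutInThree g p (p + 2 ^ u) h A := by
  set c : ℕ → ℕ := fun t => #{a ∈ A | g a < t} with hc
  have hmono : Monotone c := fun s t hst =>
    card_le_card <| monotone_filter_right A fun a _ ha => ha.trans_le hst
  have hzero : c 0 = 0 := by simp [hc]
  have htop : #A ≤ c (N + 1) :=
    (congrArg card (filter_true_of_mem fun a ha => Nat.lt_succ_of_le (hgN a ha))).ge
  have hjump : ∀ t, c (t + 1) < c t + h := fun t => by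
    have hblock : #{a ∈ A | t ≤ g a ∧ g a < t + 1} < h := by
      refine lt_of_not_ge fun hle => hspread ⟨t, hle.trans (card_le_card ?_)⟩
      exact monotone_filter_right A fun a _ ha => by omega
    have := card_filter_lt_add_card_filter g A (Nat.le_add_right t 1)
    simp only [hc]
    omega
  obtain ⟨p, u, hN, hleft, hmid, hright⟩ :=
    exists_window_of_monotone hmono hzero htop hh hA hjump
  have hpq := card_filter_lt_add_card_filter g A (Nat.le_add_right p (2 ^ u))
  have hq := card_filter_add_card_filter_not (s := A) (fun a => g a < p + 2 ^ u)
  simp only [not_lt] at hq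
  simp only [hc] at hleft hmid hright
  exact ⟨p, u, hN, hleft, by omega, by omega⟩

end Separators

/-! ### Selecting the sources -/

section Blocks

lemma exists_card_le_card_mul_card_fiber {α β : Type*} [DecidableEq β] {s : Finset α} {t : Finset β}
    {f : α → β} (hf : ∀ a ∈ s, f a ∈ t) (ht : t.Nonempty) :
    ∃ y ∈ t, #s ≤ #t * #{a ∈ s | f a = y} := by
  obtain ⟨y, hy, hmax⟩ := t.exists_max_image (fun y => #{a ∈ s | f a = y}) ht
  exact ⟨y, hy, (card_le_mul_card_image_of_maps_to hf _ hmax).trans_eq (mul_comm _ _)⟩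

lemma card_le_of_div_eq_of_mod_eq {X : Finset ℕ} {m d v r : ℕ} (hd : 0 < d)
    (hdiv : ∀ x ∈ X, x / (m * d) = v) (hmod : ∀ x ∈ X, x % m = r) : #X ≤ d := by
  have hmaps : ∀ x ∈ X, x / m ∈ Ico (v * d) ((v + 1) * d) := fun x hx => by
    rw [mem_Ico, ← Nat.le_div_iff_mul_le hd, ← Nat.div_lt_iff_lt_mul hd, Nat.div_div_eq_div_mul,
      hdiv x hx]
    exact ⟨le_rfl, v.lt_succ_self⟩
  have hinj : (X : Set ℕ).InjOn (· / m) := fun x hx y hy hxy => by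
    dsimp only at hxy
    rw [← Nat.div_add_mod x m, ← Nat.div_add_mod y m, hmod x hx, hmod y hy, hxy]
  simpa [add_mul] using card_le_card_of_injOn (· / m) hmaps hinj

variable {S : Finset ℕ} {b : ℕ}

/-- The block containing the column `c`, when the sources in `S` are ranked from left to right and
their ranks are cut into blocks of length `b`. -/
def sourceBlock (S : Finset ℕ) (b c : ℕ) : ℕ := Nat.count (· ∈ S) c / b

lemma sourceBlock_monotone : Monotone (sourceBlock S b) := fun _ _ h =>
  Nat.div_le_div_right (Nat.count_monotone _ h)

lemma sourceBlock_le (c : ℕ) : sourceBlock S b c ≤ #S / b := by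
  refine Nat.div_le_div_right ?_
  rw [Nat.count_eq_card_filter_range]
  exact card_le_card fun x hx => (mem_filter.mp hx).2

lemma count_mem_injOn (S : Finset ℕ) : (S : Set ℕ).InjOn (Nat.count (· ∈ S)) :=
  fun _ hx _ hy hxy => Nat.count_injective hx hy hxy

end Blocks

section Selection

variable {σ : Type*} [DecidableEq σ] {S : Finset ℕ} {sq : ℕ → σ} {met : σ → Finset ℕ}
  {F : Finset σ} {b d h k m L : ℕ}

lemma card_sourceShadow_le {T : Finset ℕ} {Q : σ} {v r : ℕ} (hTS : T ⊆ S) (hd : 0 < d)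
    (hblock : ∀ c ∈ sourcesOf T sq Q, sourceBlock S (m * d) c = v)
    (hres : ∀ c ∈ T, Nat.count (· ∈ S) c % m = r) : #(sourceShadow T sq Q) ≤ d := by
  have hsub : sourceShadow T sq Q ⊆ T := filter_subset _ _
  rw [← card_image_of_injOn ((count_mem_injOn S).mono (coe_subset.mpr (hsub.trans hTS)))]
  refine card_le_of_div_eq_of_mod_eq (m := m) (v := v) hd (forall_mem_image.mpr fun c hc => ?_)
    (forall_mem_image.mpr fun c hc => hres c (hsub hc))
  obtain ⟨-, a, ha, e, he, hac, hce⟩ := mem_filter.mp hc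
  exact le_antisymm ((sourceBlock_monotone hce).trans_eq (hblock e he))
    ((hblock a ha).ge.trans (sourceBlock_monotone hac))

lemma exists_subset_of_forall_isConcentrated (hm : 0 < m) (hd : 0 < d)
    (hF : ∀ Q ∈ F, IsConcentrated (sourceBlock S (m * d)) h (sourcesOf S sq Q)) :
    ∃ T ⊆ S, h * #F ≤ m * #T ∧ ∀ Q, #(sourceShadow T sq Q) ≤ d := by
  choose! v hv using hF
  set U : Finset ℕ := {c ∈ S | sq c ∈ F ∧ sourceBlock S (m * d) c = v (sq c)} with hU
  have hcardU : h * #F ≤ #U := by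
    refine mul_card_image_le_card_of_maps_to (f := sq) (fun c hc => (mem_filter.mp hc).2.1) _
      fun Q hQ => (hv Q hQ).trans (card_le_card fun c hc => ?_)
    simp only [hU, mem_filter, mem_sourcesOf] at hc ⊢
    obtain ⟨⟨hcS, rfl⟩, hcv⟩ := hc
    exact ⟨⟨hcS, hQ, hcv⟩, rfl⟩
  obtain ⟨r, -, hr⟩ := exists_card_le_card_mul_card_fiber (s := U) (t := range m)
    (f := fun c => Nat.count (· ∈ S) c % m) (fun c _ => mem_range.mpr (Nat.mod_lt _ hm))
    (nonempty_range_iff.mpr hm.ne')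
  rw [card_range] at hr
  have hUS : U ⊆ S := filter_subset _ _
  refine ⟨_, (filter_subset _ _).trans hUS, hcardU.trans hr, fun Q =>
    card_sourceShadow_le (v := v Q) ((filter_subset _ _).trans hUS) hd (fun c hc => ?_)
      fun c hc => (mem_filter.mp hc).2⟩
  obtain ⟨hcU, rfl⟩ := mem_sourcesOf.mp hc
  exact (mem_filter.mp (mem_filter.mp hcU).1).2.2

lemma exists_dyadic_subset (sq : ℕ → σ) (hSL : #S < 2 ^ (L + 1)) :
    ∃ T ⊆ S, ∃ a, #S ≤ (L + 1) * #T ∧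
      ∀ Q ∈ T.image sq, 2 ^ a ≤ #(sourcesOf T sq Q) ∧ #(sourcesOf T sq Q) < 2 ^ (a + 1) := by
  set f : ℕ → ℕ := fun c => Nat.log 2 #(sourcesOf S sq (sq c)) with hf
  obtain ⟨a, -, ha⟩ := exists_card_le_card_mul_card_fiber (s := S) (t := range (L + 1)) (f := f)
    (fun c _ => mem_range.mpr <|
      Nat.log_lt_of_lt_pow' L.succ_ne_zero ((card_filter_le _ _).trans_lt hSL))
    (nonempty_range_iff.mpr L.succ_ne_zero)
  refine ⟨_, filter_subset _ _, a, by simpa only [card_range] using ha,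
    forall_mem_image.mpr fun c hc => ?_⟩
  obtain ⟨hcS, rfl⟩ := mem_filter.mp hc
  have hfiber : sourcesOf {x ∈ S | f x = f c} sq (sq c) = sourcesOf S sq (sq c) := by
    ext x
    simp only [mem_sourcesOf, mem_filter, hf]
    exact ⟨fun hx => ⟨hx.1.1, hx.2⟩, fun hx => ⟨⟨hx.1, by rw [hx.2]⟩, hx.2⟩⟩
  have hne : #(sourcesOf S sq (sq c)) ≠ 0 := card_ne_zero_of_mem (mem_sourcesOf.mpr ⟨hcS, rfl⟩)
  rw [hfiber]
  exact ⟨Nat.pow_log_le_self 2 hne, Nat.lt_pow_succ_log_self one_lt_two _⟩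

namespace IsPlanarSystem

lemma pos_of_nonempty (hS : IsPlanarSystem S sq met k) (hne : S.Nonempty) : 0 < k :=
  hne.elim fun c hc => (card_pos.mpr ⟨c, hS.mem_met c hc⟩).trans_le (hS.card_met_le c hc)

open scoped Classical in
lemma mul_card_not_isConcentrated_le (hS : IsPlanarSystem S sq met k) (hh : 1 ≤ h)
    (hlow : ∀ Q ∈ S.image sq, 6 * h ≤ #(sourcesOf S sq Q) + 5) (hSL : #S < 2 ^ (L + 1)) :
    h * #{Q ∈ S.image sq | ¬ IsConcentrated (sourceBlock S b) h (sourcesOf S sq Q)} ≤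
      #S / b * (L + 1) * (2 * k) := by
  set bad := {Q ∈ S.image sq | ¬ IsConcentrated (sourceBlock S b) h (sourcesOf S sq Q)}
  set N := #S / b
  set cut : ℕ × ℕ → Finset σ := fun w => {Q ∈ S.image sq |
    CutInThree (sourceBlock S b) w.1 (w.1 + 2 ^ w.2) h (sourcesOf S sq Q)}
  have hcover : bad ⊆ (range N ×ˢ range (L + 1)).biUnion cut := fun Q hQ => by
    obtain ⟨hQF, hQ⟩ := mem_filter.mp hQ
    obtain ⟨p, u, hpu, hQcut⟩ := exists_cutInThree_of_not_isConcentrated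
      (fun c _ => sourceBlock_le c) hh (hlow Q hQF) hQ
    have hu : 2 ^ u < 2 ^ (L + 1) := ((Nat.le_add_left _ _).trans hpu).trans_lt
      ((Nat.div_le_self _ _).trans_lt hSL)
    have hp : p < N := (Nat.lt_add_of_pos_right (Nat.two_pow_pos u)).trans_le hpu
    refine mem_biUnion.mpr ⟨(p, u), mem_product.mpr ⟨mem_range.mpr hp, mem_range.mpr ?_⟩,
      mem_filter.mpr ⟨hQF, hQcut⟩⟩
    exact (Nat.pow_lt_pow_iff_right one_lt_two).mp hu
  have hcard : ∀ w ∈ range N ×ˢ range (L + 1), #(cut w) ≤ 2 * k / h := fun w _ => by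
    rw [Nat.le_div_iff_mul_le hh, mul_comm]
    exact hS.mul_card_le_of_cutInThree sourceBlock_monotone (filter_subset _ _)
      fun Q hQ => (mem_filter.mp hQ).2
  calc h * #bad ≤ h * (#(range N ×ˢ range (L + 1)) * (2 * k / h)) := Nat.mul_le_mul_left _ <|
        (card_le_card hcover).trans (card_biUnion_le_card_mul _ _ _ hcard)
    _ = N * (L + 1) * (h * (2 * k / h)) := by simp only [card_product, card_range]; ring
    _ ≤ N * (L + 1) * (2 * k) := Nat.mul_le_mul_left _ (Nat.mul_div_le _ _)

open scoped Classical in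
lemma card_image_le_two_mul_card_isConcentrated (hS : IsPlanarSystem S sq met k) (hh : 1 ≤ h)
    (hb : 0 < b) (hkb : 48 * (L + 1) * k ≤ b)
    (hlow : ∀ Q ∈ S.image sq, 6 * h ≤ #(sourcesOf S sq Q) + 5)
    (hupp : ∀ Q ∈ S.image sq, #(sourcesOf S sq Q) ≤ 12 * h) (hSL : #S < 2 ^ (L + 1)) :
    #(S.image sq) ≤
      2 * #{Q ∈ S.image sq | IsConcentrated (sourceBlock S b) h (sourcesOf S sq Q)} := by
  set F := S.image sq
  set bad := {Q ∈ F | ¬ IsConcentrated (sourceBlock S b) h (sourcesOf S sq Q)} with hbad_def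
  have hbad : b * h * (2 * #bad) ≤ b * h * #F :=
    calc b * h * (2 * #bad) = 2 * b * (h * #bad) := by ring
      _ ≤ 2 * b * (#S / b * (L + 1) * (2 * k)) :=
          Nat.mul_le_mul_left _ (hS.mul_card_not_isConcentrated_le hh hlow hSL)
      _ = b * (#S / b) * (4 * (L + 1) * k) := by ring
      _ ≤ 12 * h * #F * (4 * (L + 1) * k) := Nat.mul_le_mul_right _ <|
          (Nat.mul_div_le _ _).trans (card_le_mul_card_image S _ hupp)
      _ = 48 * (L + 1) * k * (h * #F) := by ring
      _ ≤ b * (h * #F) := Nat.mul_le_mul_right _ hkb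
      _ = b * h * #F := by ring
  have hbad' : 2 * #bad ≤ #F := Nat.le_of_mul_le_mul_left hbad (Nat.mul_pos hb hh)
  have hsplit := card_filter_add_card_filter_not (s := F)
    (fun Q => IsConcentrated (sourceBlock S b) h (sourcesOf S sq Q))
  simp only [← hbad_def] at hsplit
  omega

/-- At most half of the squares are not concentrated when all squares have about the same number
of sources, so it is enough to serve the others. -/
lemma exists_subset_of_card_sourcesOf_mem_Icc (hS : IsPlanarSystem S sq met k) (hh : 1 ≤ h)
    (hm : 0 < m) (hd : 0 < d) (hkm : 48 * (L + 1) * k ≤ m * d)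
    (hlow : ∀ Q ∈ S.image sq, 6 * h ≤ #(sourcesOf S sq Q) + 5)
    (hupp : ∀ Q ∈ S.image sq, #(sourcesOf S sq Q) ≤ 12 * h) (hSL : #S < 2 ^ (L + 1)) :
    ∃ T ⊆ S, #S ≤ 24 * m * #T ∧ ∀ Q, #(sourceShadow T sq Q) ≤ d := by
  classical
  obtain ⟨T, hTS, hT, hshadow⟩ := exists_subset_of_forall_isConcentrated hm hd
    fun Q (hQ : Q ∈ {Q ∈ S.image sq | IsConcentrated _ h _}) => (mem_filter.mp hQ).2
  refine ⟨T, hTS, ?_, hshadow⟩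
  have hF := hS.card_image_le_two_mul_card_isConcentrated hh (Nat.mul_pos hm hd) hkm hlow hupp hSL
  calc #S ≤ 12 * h * #(S.image sq) := card_le_mul_card_image S _ hupp
    _ ≤ 12 * h * (2 * _) := Nat.mul_le_mul_left _ hF
    _ = 24 * (h * _) := by ring
    _ ≤ 24 * (m * #T) := Nat.mul_le_mul_left _ hT
    _ = 24 * m * #T := (mul_assoc _ _ _).symm

theorem exists_subset_card_sourceShadow_le {c : ℕ} (hS : IsPlanarSystem S sq met (c * d))
    (hSL : #S < 2 ^ (L + 1)) :
    ∃ T ⊆ S, #S ≤ 1152 * c * (L + 1) ^ 2 * #T ∧ ∀ Q, #(sourceShadow T sq Q) ≤ d := by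
  rcases S.eq_empty_or_nonempty with rfl | hne
  · exact ⟨∅, subset_rfl, by simp, fun Q => by simp [sourceShadow]⟩
  have hcd := hS.pos_of_nonempty hne
  have hc := Nat.pos_of_mul_pos_right hcd
  have hd := Nat.pos_of_mul_pos_left hcd
  obtain ⟨T, hTS, a, hT, hTa⟩ := exists_dyadic_subset sq hSL
  have ha := Nat.one_le_two_pow (n := a)
  obtain ⟨U, hUT, hU, hshadow⟩ := (hS.mono hTS).exists_subset_of_card_sourcesOf_mem_Icc
    (h := (2 ^ a + 5) / 6) (m := 48 * (L + 1) * c) (L := L) (by omega) (by positivity) hd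
    (by rw [mul_assoc _ c d])
    (fun Q hQ => by have := hTa Q hQ; omega)
    (fun Q hQ => by have := hTa Q hQ; rw [pow_succ] at this; omega)
    ((card_le_card hTS).trans_lt hSL)
  refine ⟨U, hUT.trans hTS, ?_, hshadow⟩
  calc #S ≤ (L + 1) * #T := hT
    _ ≤ (L + 1) * (24 * (48 * (L + 1) * c) * #U) := Nat.mul_le_mul_left _ hU
    _ = 1152 * c * (L + 1) ^ 2 * #U := by ring

end IsPlanarSystem

end Selection

/-! ### Planarity of the grid -/

lemma sum_map_darts_add_eq {V A : Type*} [AddCommMonoid A] {G : SimpleGraph V} {f f' : G.Dart → A}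
    {φ : V → A} {u v : V} (w : G.Walk u v)
    (h : ∀ e ∈ w.darts, f e + φ e.fst = f' e + φ e.snd) :
    (w.darts.map f).sum + φ u = (w.darts.map f').sum + φ v := by
  induction w with
  | nil => simp
  | cons hxy p ih =>
    simp only [SimpleGraph.Walk.darts_cons, List.forall_mem_cons] at h
    simp only [SimpleGraph.Walk.darts_cons, List.map_cons, List.sum_cons]
    rw [add_right_comm, h.1, add_right_comm, add_assoc, ih h.2, add_assoc]

lemma gridG_adj {ℓ : ℕ} {x y : Vtx} : (gridG ℓ).Adj x y ↔
    (1 ≤ x.1 ∧ x.1 ≤ ℓ ∧ 1 ≤ x.2 ∧ x.2 ≤ ℓ) ∧ (1 ≤ y.1 ∧ y.1 ≤ ℓ ∧ 1 ≤ y.2 ∧ y.2 ≤ ℓ) ∧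
      ((x.1 = y.1 ∧ (x.2 + 1 = y.2 ∨ y.2 + 1 = x.2)) ∨
        (x.2 = y.2 ∧ (x.1 + 1 = y.1 ∨ y.1 + 1 = x.1))) := by
  simp only [gridG, rectGrid, SimpleGraph.fromRel_adj, ne_eq, Prod.ext_iff]
  omega

/-- Whether the step from `x` to `y` crosses the vertical ray that starts half a column to the
right of `(i, j)` and goes away from the top row, as a number modulo 2. -/
def rayCrossing (i j : ℕ) (x y : Vtx) : ZMod 2 :=
  if i < x.1 ∧ x.1 = y.1 ∧ ((x.2 = j ∧ y.2 = j + 1) ∨ (y.2 = j ∧ x.2 = j + 1)) then 1 else 0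

/-- The parity of the number of times a walk crosses the vertical ray that starts half a column to
the right of `(i, j)` and goes away from the top row. -/
def crossingParity {G : SimpleGraph Vtx} (i j : ℕ) {u v : Vtx} (w : G.Walk u v) : ZMod 2 :=
  (w.darts.map fun e => rayCrossing i j e.fst e.snd).sum

lemma ne_of_mem_darts_of_notMem_support {V : Type*} {G : SimpleGraph V} {u v z : V}
    {w : G.Walk u v} (hz : z ∉ w.support) {e : G.Dart} (he : e ∈ w.darts) :
    e.fst ≠ z ∧ e.snd ≠ z :=
  ⟨ne_of_mem_of_not_mem (w.dart_fst_mem_support_of_mem_darts he) hz,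
    ne_of_mem_of_not_mem (w.dart_snd_mem_support_of_mem_darts he) hz⟩

lemma crossingParity_succ_row {G : SimpleGraph Vtx} {i j : ℕ} {u v : Vtx} (w : G.Walk u v)
    (h : (i + 1, j) ∉ w.support) :
    crossingParity (i + 1) j w = crossingParity i j w := by
  refine congrArg List.sum (List.map_congr_left fun e he => ?_)
  have hne := ne_of_mem_darts_of_notMem_support h he
  simp only [ne_eq, Prod.ext_iff] at hne
  simp only [rayCrossing]
  split_ifs <;> first | rfl | omega

section CrossingParity

variable {ℓ i j : ℕ} {u v : Vtx} (w : (gridG ℓ).Walk u v)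

/-- The part of column `j + 1` below row `i` can be left only through one of the two rays. -/
lemma crossingParity_succ_col (hu : u.1 ≤ i) (hv : v.1 ≤ i) (h : (i, j + 1) ∉ w.support) :
    crossingParity i (j + 1) w = crossingParity i j w := by
  have hsum := sum_map_darts_add_eq w (f := fun e => rayCrossing i (j + 1) e.fst e.snd)
    (f' := fun e => rayCrossing i j e.fst e.snd)
    (φ := fun x => if x.2 = j + 1 ∧ i < x.1 then 1 else 0) fun e he => by
      have hadj := gridG_adj.mp e.adj
      have hne := ne_of_mem_darts_of_notMem_support h he
      simp only [ne_eq, Prod.ext_iff] at hne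
      simp only [rayCrossing]
      split_ifs <;> first | rfl | omega
  simpa only [crossingParity, hu.not_gt, hv.not_gt, and_false, if_false, add_zero] using hsum

lemma crossingParity_one_add (h : (1, j) ∉ w.support) :
    crossingParity 1 j w + (if u.2 ≤ j then 1 else 0) = if v.2 ≤ j then 1 else 0 := by
  have hsum := sum_map_darts_add_eq w (f := fun e => rayCrossing 1 j e.fst e.snd)
    (f' := fun _ => 0) (φ := fun x => if x.2 ≤ j then 1 else 0) fun e he => by
      have hadj := gridG_adj.mp e.adj
      have hne := ne_of_mem_darts_of_notMem_support h he
      simp only [ne_eq, Prod.ext_iff] at hne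
      simp only [rayCrossing]
      split_ifs <;> first | rfl | omega
  simpa only [crossingParity, List.sum_map_zero, zero_add] using hsum

lemma crossingParity_eq_of_adj {x y : Vtx} (hu : u.1 = 1) (hv : v.1 = 1)
    (hxy : (gridG ℓ).Adj x y) (hx : x ∉ w.support) (hy : y ∉ w.support) :
    crossingParity x.1 x.2 w = crossingParity y.1 y.2 w := by
  obtain ⟨x₁, x₂⟩ := x
  obtain ⟨y₁, y₂⟩ := y
  have hadj := gridG_adj.mp hxy
  dsimp only at hadj ⊢
  obtain ⟨⟨hx₁, -⟩, -, ⟨rfl, rfl | rfl⟩ | ⟨rfl, rfl | rfl⟩⟩ := hadj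
  · exact (crossingParity_succ_col w (hu.trans_le hx₁) (hv.trans_le hx₁) hy).symm
  · exact crossingParity_succ_col w (hu.trans_le hx₁) (hv.trans_le hx₁) hx
  · exact (crossingParity_succ_row w hy).symm
  · exact crossingParity_succ_row w hx

end CrossingParity

/-- The rays starting at the vertices of the second walk are all crossed equally often modulo 2 by
the first, if the walks are disjoint; but at `b` and at `e` the parities differ. -/
lemma exists_mem_support_of_alternating_ends {ℓ a b c e : ℕ} (hab : a < b) (hbc : b < c)
    (hce : c < e) (w : (gridG ℓ).Walk (1, a) (1, c)) (w' : (gridG ℓ).Walk (1, b) (1, e)) :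
    ∃ x ∈ w.support, x ∈ w'.support := by
  by_contra! hdisj
  have hnot : ∀ x ∈ w'.support, x ∉ w.support := fun x hx' hx => hdisj x hx hx'
  have hconst := sum_map_darts_add_eq w' (f := fun _ => 0) (f' := fun _ => 0)
    (φ := fun x => crossingParity x.1 x.2 w) fun d hd => congrArg (0 + ·) <|
      crossingParity_eq_of_adj w rfl rfl d.adj
        (hnot _ (w'.dart_fst_mem_support_of_mem_darts hd))
        (hnot _ (w'.dart_snd_mem_support_of_mem_darts hd))
  have hb := crossingParity_one_add w (hnot _ w'.start_mem_support)
  have he := crossingParity_one_add w (hnot _ w'.end_mem_support)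
  rw [if_pos hab.le, if_neg hbc.not_ge] at hb
  rw [if_pos (hab.trans (hbc.trans hce)).le, if_pos hce.le, ← add_left_cancel hconst, hb] at he
  exact zero_ne_one he

/-! ### Rectangles in the grid -/

section Rectangles

variable {ℓ : ℕ}

lemma exists_walk_of_memSquare {Q : SquareSpec} (hQ₁ : IsIntervalIn ℓ Q.1)
    (hQ₂ : IsIntervalIn ℓ Q.2) {x y : Vtx} (hx : memSquare x Q) (hy : memSquare y Q) :
    ∃ w : (gridG ℓ).Walk x y, ∀ z ∈ w.support, memSquare z Q := by
  obtain ⟨I, J⟩ := Q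
  obtain ⟨a, b, ha, hab, hb, rfl⟩ := hQ₁
  obtain ⟨c, e, hc, hce, he, rfl⟩ := hQ₂
  let f : (SimpleGraph.pathGraph (b - a + 1)).boxProd (SimpleGraph.pathGraph (e - c + 1)) →g
      gridG ℓ :=
    { toFun := fun v => (a + v.1, c + v.2)
      map_rel' := fun {v v'} hadj => by
        simp only [SimpleGraph.boxProd_adj, SimpleGraph.pathGraph_adj, Fin.ext_iff] at hadj
        rw [gridG_adj]
        have := v.1.isLt; have := v.2.isLt; have := v'.1.isLt; have := v'.2.isLt
        simp only
        omega }
  have hsurj : ∀ z, memSquare z (Icc a b, Icc c e) → ∃ v, f v = z := fun z hz => by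
    simp only [memSquare, mem_Icc] at hz
    exact ⟨(⟨z.1 - a, by omega⟩, ⟨z.2 - c, by omega⟩),
      Prod.ext (Nat.add_sub_cancel' hz.1.1) (Nat.add_sub_cancel' hz.2.1)⟩
  obtain ⟨s, rfl⟩ := hsurj x hx
  obtain ⟨t, rfl⟩ := hsurj y hy
  obtain ⟨w⟩ := ((SimpleGraph.pathGraph_preconnected _).boxProd
    (SimpleGraph.pathGraph_preconnected _)) s t
  refine ⟨w.map f, fun z hz => ?_⟩
  obtain ⟨v, -, rfl⟩ := List.mem_map.mp (SimpleGraph.Walk.support_map f w ▸ hz)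
  have := v.1.isLt; have := v.2.isLt
  change (a + v.1 ∈ Icc a b) ∧ (c + v.2 ∈ Icc c e)
  simp only [mem_Icc]
  omega

/-- The perimeter of the rectangle with rows `a..b` and columns `c..e`. -/
def rectPerimeter (a b c e : ℕ) : Finset Vtx := {a, b} ×ˢ Icc c e ∪ Icc a b ×ˢ {c, e}

lemma card_rectPerimeter_le (a b c e : ℕ) :
    #(rectPerimeter a b c e) ≤ 2 * #(Icc a b) + 2 * #(Icc c e) := by
  refine (card_union_le _ _).trans ?_
  rw [card_product, card_product, add_comm, mul_comm (#(Icc a b))]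
  exact Nat.add_le_add (Nat.mul_le_mul_right _ card_le_two) (Nat.mul_le_mul_right _ card_le_two)

lemma exists_mem_rectPerimeter_of_memSquare {a b c e j : ℕ} (ha : 1 ≤ a) {v : Vtx}
    (w : (gridG ℓ).Walk (1, j) v) {x : Vtx} (hx : x ∈ w.support)
    (hxQ : memSquare x (Icc a b, Icc c e)) : ∃ y ∈ w.support, y ∈ rectPerimeter a b c e := by
  simp only [rectPerimeter, mem_union, mem_product, mem_insert, mem_singleton, mem_Icc]
  by_cases hstart : memSquare (1, j) (Icc a b, Icc c e)
  · simp only [memSquare, mem_Icc] at hstart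
    exact ⟨(1, j), w.start_mem_support, .inl ⟨.inl (by omega), hstart.2⟩⟩
  · obtain ⟨f, hf, hout, hin⟩ := (w.takeUntil x hx).exists_boundary_dart
      {z | ¬ memSquare z (Icc a b, Icc c e)} hstart (not_not.mpr hxQ)
    refine ⟨f.snd, w.support_takeUntil_subset_support hx
      ((w.takeUntil x hx).dart_snd_mem_support_of_mem_darts hf), ?_⟩
    have hadj := gridG_adj.mp f.adj
    simp only [Set.mem_ofPred_eq, not_not, memSquare, mem_Icc] at hout hin
    omega

end Rectangles

/-- Pairwise disjoint rectangles of the grid with sides at most `d`. -/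
structure IsDisjointRectangles (ℓ d : ℕ) (Qs : Finset SquareSpec) : Prop where
  rows : ∀ Q ∈ Qs, IsIntervalIn ℓ Q.1 ∧ #Q.1 ≤ d
  columns : ∀ Q ∈ Qs, IsIntervalIn ℓ Q.2 ∧ #Q.2 ≤ d
  eq_of_memSquare : ∀ Q ∈ Qs, ∀ R ∈ Qs, ∀ x, memSquare x Q → memSquare x R → Q = R

lemma IsCanonicalIntervals.eq_of_mem {W d : ℕ} {Is : Finset (Finset ℕ)}
    (h : IsCanonicalIntervals W d Is) {I J : Finset ℕ} (hI : I ∈ Is) (hJ : J ∈ Is) {i : ℕ}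
    (hiI : i ∈ I) (hiJ : i ∈ J) : I = J := by
  by_contra hne
  have hsep := h.2 I hI J hJ hne i hiI i hiJ
  rw [sub_self, abs_zero] at hsep
  omega

lemma IsCanonicalSquares.isDisjointRectangles {W d : ℕ} {Qs : Finset SquareSpec}
    (h : IsCanonicalSquares W d Qs) : IsDisjointRectangles W d Qs := by
  obtain ⟨I₁, I₂, hI₁, hI₂, rfl⟩ := h
  refine ⟨fun Q hQ => ?_, fun Q hQ => ?_, fun Q hQ R hR x hxQ hxR => ?_⟩
  · exact (hI₁.1 _ (mem_product.mp hQ).1).imp_right Eq.le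
  · exact (hI₂.1 _ (mem_product.mp hQ).2).imp_right Eq.le
  · rw [mem_product] at hQ hR
    exact Prod.ext (hI₁.eq_of_mem hQ.1 hR.1 hxQ.1 hxR.1) (hI₂.eq_of_mem hQ.2 hR.2 hxQ.2 hxR.2)

/-! ### Routings from the top row -/

section Routing

variable {ℓ d : ℕ} {Qs : Finset SquareSpec} {S : Finset ℕ} {dest : ℕ → Vtx}
  {w : ∀ c : ℕ, (gridG ℓ).Walk (1, c) (dest c)} {sq : ℕ → SquareSpec}

/-- The columns in `S` whose walk meets the rectangle `Q`. -/
def metSources (w : ∀ c : ℕ, (gridG ℓ).Walk (1, c) (dest c)) (S : Finset ℕ) (Q : SquareSpec) :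
    Finset ℕ :=
  {c ∈ S | ∃ x ∈ (w c).support, memSquare x Q}

lemma card_metSources_le
    (hdisj : ∀ c ∈ S, ∀ c' ∈ S, ∀ x ∈ (w c).support, x ∈ (w c').support → c = c')
    {Q : SquareSpec} (hQ₁ : IsIntervalIn ℓ Q.1) (hQ₂ : IsIntervalIn ℓ Q.2) :
    #(metSources w S Q) ≤ 2 * #Q.1 + 2 * #Q.2 := by
  obtain ⟨I, J⟩ := Q
  obtain ⟨a, b, ha, -, -, rfl⟩ := hQ₁
  obtain ⟨c, e, -, -, -, rfl⟩ := hQ₂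
  have hmeets : ∀ s ∈ metSources w S (Icc a b, Icc c e),
      ∃ y ∈ (w s).support, y ∈ rectPerimeter a b c e := fun s hs => by
    obtain ⟨-, x, hx, hxQ⟩ := mem_filter.mp hs
    exact exists_mem_rectPerimeter_of_memSquare ha (w s) hx hxQ
  choose! y hyw hyB using hmeets
  refine (card_le_card_of_injOn y hyB fun s hs t ht hst => ?_).trans (card_rectPerimeter_le a b c e)
  exact hdisj s (filter_subset _ _ hs) t (filter_subset _ _ ht) (y s) (hyw s hs) (hst ▸ hyw t ht)

lemma exists_walk_between_sources {Q : SquareSpec} (hQ₁ : IsIntervalIn ℓ Q.1)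
    (hQ₂ : IsIntervalIn ℓ Q.2) (w : ∀ c : ℕ, (gridG ℓ).Walk (1, c) (dest c)) {X : Finset ℕ}
    (hX : ∀ s ∈ X, memSquare (dest s) Q) {a c : ℕ} (ha : a ∈ X) (hc : c ∈ X) :
    ∃ p : (gridG ℓ).Walk (1, a) (1, c),
      ∀ z ∈ p.support, memSquare z Q ∨ ∃ s ∈ X, z ∈ (w s).support := by
  obtain ⟨r, hr⟩ := exists_walk_of_memSquare hQ₁ hQ₂ (hX a ha) (hX c hc)
  refine ⟨(w a).append (r.append (w c).reverse), fun z hz => ?_⟩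
  simp only [SimpleGraph.Walk.mem_support_append_iff, SimpleGraph.Walk.support_reverse,
    List.mem_reverse] at hz
  rcases hz with hz | hz | hz
  · exact .inr ⟨a, ha, hz⟩
  · exact .inl (hr z hz)
  · exact .inr ⟨c, hc, hz⟩

lemma IsDisjointRectangles.isPlanarSystem_metSources (hQs : IsDisjointRectangles ℓ d Qs)
    (hdisj : ∀ c ∈ S, ∀ c' ∈ S, ∀ x ∈ (w c).support, x ∈ (w c').support → c = c')
    (hsq : ∀ c ∈ S, sq c ∈ Qs) (hdest : ∀ c ∈ S, memSquare (dest c) (sq c)) :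
    IsPlanarSystem S sq (metSources w S) (4 * d) where
  mem_met c hc := mem_filter.mpr ⟨hc, dest c, (w c).end_mem_support, hdest c hc⟩
  card_met_le c hc := by
    obtain ⟨hQ₁, hd₁⟩ := hQs.rows _ (hsq c hc)
    obtain ⟨hQ₂, hd₂⟩ := hQs.columns _ (hsq c hc)
    have := card_metSources_le hdisj hQ₁ hQ₂
    omega
  not_alternates Q R hQR := by
    rintro ⟨a, ha, b, hb, c, hc, e, he, hab, hbc, hce⟩
    have hmem : ∀ {Q R s}, s ∈ sourcesOf S sq Q \ metSources w S R →
        s ∈ S ∧ sq s = Q ∧ ∀ x ∈ (w s).support, ¬ memSquare x R := fun hs => by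
      obtain ⟨hsQ, hsR⟩ := mem_sdiff.mp hs
      obtain ⟨hsS, hsQ⟩ := mem_sourcesOf.mp hsQ
      exact ⟨hsS, hsQ, fun x hx hxR => hsR (mem_filter.mpr ⟨hsS, x, hx, hxR⟩)⟩
    have hjoin : ∀ {Q R s t}, s ∈ sourcesOf S sq Q \ metSources w S R →
        t ∈ sourcesOf S sq Q \ metSources w S R → Q ∈ Qs ∧
          ∃ p : (gridG ℓ).Walk (1, s) (1, t), ∀ z ∈ p.support,
            memSquare z Q ∨ ∃ s ∈ sourcesOf S sq Q \ metSources w S R, z ∈ (w s).support :=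
      fun {Q R s t} hs ht => by
        have hQ : Q ∈ Qs := (hmem hs).2.1 ▸ hsq s (hmem hs).1
        exact ⟨hQ, exists_walk_between_sources (hQs.rows Q hQ).1 (hQs.columns Q hQ).1 w
          (fun c hc => by
            obtain ⟨hcS, rfl, -⟩ := hmem hc
            exact hdest c hcS) hs ht⟩
    obtain ⟨hQ, p, hp⟩ := hjoin ha hc
    obtain ⟨hR, p', hp'⟩ := hjoin hb he
    obtain ⟨x, hx, hx'⟩ := exists_mem_support_of_alternating_ends hab hbc hce p p'
    rcases hp x hx with hxQ | ⟨s, hs, hxs⟩ <;> rcases hp' x hx' with hxR | ⟨t, ht, hxt⟩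
    · exact hQR (hQs.eq_of_memSquare Q hQ R hR x hxQ hxR)
    · exact (hmem ht).2.2 x hxt hxQ
    · exact (hmem hs).2.2 x hxs hxR
    · obtain rfl := hdisj s (hmem hs).1 t (hmem ht).1 x hxs hxt
      exact hQR ((hmem hs).2.1.symm.trans (hmem ht).2.1)

lemma NodeDisjointRoutable.injOn_fst {V : Type*} {G : SimpleGraph V} {M : Finset (V × V)}
    (h : NodeDisjointRoutable G M) : Set.InjOn Prod.fst (M : Set (V × V)) := by
  obtain ⟨P, -, hP⟩ := h
  intro m hm m' hm' hmm'
  by_contra hne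
  refine hP ⟨m, hm⟩ ⟨m', hm'⟩ (fun e => hne (congrArg Subtype.val e)) m.1
    (P _).start_mem_support ?_
  rw [hmm']
  exact (P ⟨m', hm'⟩).start_mem_support

lemma NodeDisjointRoutable.injOn_column {M : Finset DPair}
    (h : NodeDisjointRoutable (gridG ℓ) M) (hsrc : ∀ m ∈ M, OnTopRow ℓ m.1) :
    Set.InjOn (fun m : DPair => m.1.2) M := fun _ hm _ hm' hcol =>
  h.injOn_fst hm hm' (Prod.ext ((hsrc _ hm).1.trans (hsrc _ hm').1.symm) hcol)

/-- Demand pairs on the top row are routed by walks indexed by all columns, those of the columns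
without a source being trivial. -/
lemma NodeDisjointRoutable.exists_walks {M : Finset DPair}
    (h : NodeDisjointRoutable (gridG ℓ) M) (hsrc : ∀ m ∈ M, OnTopRow ℓ m.1) :
    ∃ (dest : ℕ → Vtx) (w : ∀ c, (gridG ℓ).Walk (1, c) (dest c)), (∀ m ∈ M, dest m.1.2 = m.2) ∧
      ∀ m ∈ M, ∀ m' ∈ M, ∀ x ∈ (w m.1.2).support, x ∈ (w m'.1.2).support → m = m' := by
  have hcol := h.injOn_column hsrc
  obtain ⟨P, -, hP⟩ := h
  have hwalk : ∀ c, ∃ (v : Vtx) (p : (gridG ℓ).Walk (1, c) v), ∀ m (hm : m ∈ M), m.1.2 = c →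
      v = m.2 ∧ p.support = (P ⟨m, hm⟩).support := fun c => by
    by_cases hc : ∃ m ∈ M, m.1.2 = c
    · obtain ⟨m, hm, rfl⟩ := hc
      refine ⟨m.2, (P ⟨m, hm⟩).copy (Prod.ext (hsrc m hm).1 rfl) rfl, fun m' hm' hmm' => ?_⟩
      obtain rfl := hcol hm' hm hmm'
      exact ⟨rfl, SimpleGraph.Walk.support_copy _ _ _⟩
    · exact ⟨(1, c), .nil, fun m hm hmc => absurd ⟨m, hm, hmc⟩ hc⟩
  choose dest w hw using hwalk
  refine ⟨dest, w, fun m hm => (hw _ m hm rfl).1, fun m hm m' hm' x hx hx' => ?_⟩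
  rw [(hw _ m hm rfl).2] at hx
  rw [(hw _ m' hm' rfl).2] at hx'
  by_contra hne
  exact hP ⟨m, hm⟩ ⟨m', hm'⟩ (fun e => hne (congrArg Subtype.val e)) x hx hx'

lemma shadowCount_le_card_sourceShadow {M : Finset DPair} {T : Finset ℕ} {Q : SquareSpec}
    (hcol : Set.InjOn (fun m : DPair => m.1.2) M) (hT : ∀ m ∈ M, m.1.2 ∈ T)
    (hsq : ∀ m ∈ M, memSquare m.2 Q → sq m.1.2 = Q) :
    shadowCount M Q ≤ #(sourceShadow T sq Q) := by
  refine card_le_card_of_injOn (fun m => m.1.2) (fun m hm => ?_)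
    (hcol.mono (coe_subset.mpr (filter_subset _ _)))
  obtain ⟨hm, m₁, hm₁, hQ₁, m₂, hm₂, hQ₂, hle⟩ := mem_filter.mp hm
  exact mem_filter.mpr ⟨hT m hm, m₁.1.2, mem_sourcesOf.mpr ⟨hT m₁ hm₁, hsq m₁ hm₁ hQ₁⟩,
    m₂.1.2, mem_sourcesOf.mpr ⟨hT m₂ hm₂, hsq m₂ hm₂ hQ₂⟩, hle⟩

end Routing

lemma div_lg_pow_le {ℓ a b : ℕ} (hlog : (2 : ℝ) ^ (27 : ℕ) ≤ lg (ℓ * ℓ))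
    (hab : a ≤ 4608 * (Nat.log 2 ℓ + 1) ^ 2 * b) : (a : ℝ) / lg (ℓ * ℓ) ^ 6 ≤ b := by
  have hℓ : ℓ ≠ 0 := by
    rintro rfl
    norm_num [lg] at hlog
  have hlg : lg (ℓ * ℓ) = 2 * Real.logb 2 ℓ := by
    have hℓ' : (ℓ : ℝ) ≠ 0 := Nat.cast_ne_zero.mpr hℓ
    rw [lg, Nat.cast_mul, Real.logb_mul hℓ' hℓ', two_mul]
  have hfloor : (Nat.log 2 ℓ : ℝ) ≤ Real.logb 2 ℓ := by
    simpa using Real.natLog_le_logb ℓ 2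
  set x := lg (ℓ * ℓ)
  have hx : (9 : ℝ) ≤ x := le_trans (by norm_num) hlog
  have hab' : (a : ℝ) ≤ 4608 * ((Nat.log 2 ℓ : ℝ) + 1) ^ 2 * b := by exact_mod_cast hab
  rw [div_le_iff₀' (by positivity)]
  calc (a : ℝ) ≤ 4608 * ((Nat.log 2 ℓ : ℝ) + 1) ^ 2 * b := hab'
    _ ≤ 9 ^ 4 * x ^ 2 * b := by gcongr <;> linarith
    _ ≤ x ^ 4 * x ^ 2 * b := by gcongr
    _ = x ^ 6 * b := by ring

theorem statement0_general {ℓ d : ℕ} {Qs : Finset SquareSpec}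
    (hQs : IsDisjointRectangles ℓ d Qs) {M : Finset DPair} (hsrc : ∀ m ∈ M, OnTopRow ℓ m.1)
    (hroute : NodeDisjointRoutable (gridG ℓ) M) (hdest : ∀ m ∈ M, ∃ Q ∈ Qs, memSquare m.2 Q) :
    ∃ M' ⊆ M, #M ≤ 4608 * (Nat.log 2 ℓ + 1) ^ 2 * #M' ∧ ∀ Q ∈ Qs, HasShadowProp 1 d M' Q := by
  have hcol := hroute.injOn_column hsrc
  obtain ⟨dest, w, hw, hdisj⟩ := hroute.exists_walks hsrc
  set S : Finset ℕ := M.image fun m => m.1.2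
  have hcardS : #S = #M := card_image_of_injOn hcol
  have hSℓ : #S ≤ ℓ := (card_le_card (image_subset_iff.mpr fun m hm =>
    mem_Icc.mpr (hsrc m hm).2)).trans_eq (Nat.card_Icc 1 ℓ)
  have hsquare : ∀ c ∈ S, ∃ Q ∈ Qs, memSquare (dest c) Q :=
    forall_mem_image.mpr fun m hm => hw m hm ▸ hdest m hm
  choose! sq hsq hmem using hsquare
  have hplanar := hQs.isPlanarSystem_metSources (S := S) (w := w) (forall_mem_image.mpr fun m hm =>
    forall_mem_image.mpr fun m' hm' x hx hx' => by rw [hdisj m hm m' hm' x hx hx']) hsq hmem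
  obtain ⟨T, hTS, hcard, hshadow⟩ := hplanar.exists_subset_card_sourceShadow_le
    (hSℓ.trans_lt (Nat.lt_pow_succ_log_self one_lt_two ℓ))
  have hM'M : {m ∈ M | m.1.2 ∈ T} ⊆ M := filter_subset _ _
  have hcol' := hcol.mono (coe_subset.mpr hM'M)
  have himage : {m ∈ M | m.1.2 ∈ T}.image (fun m => m.1.2) = T := by
    rw [← filter_image (p := (· ∈ T)), filter_mem_eq_inter, inter_eq_right.mpr hTS]
  refine ⟨{m ∈ M | m.1.2 ∈ T}, hM'M, ?_, fun Q hQ => ?_⟩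
  · rwa [← hcardS, ← card_image_of_injOn hcol', himage]
  · rw [HasShadowProp, one_mul, Nat.cast_le]
    refine (shadowCount_le_card_sourceShadow hcol' (fun m hm => (mem_filter.mp hm).2)
      fun m hm hmQ => ?_).trans (hshadow Q)
    have hmS : m.1.2 ∈ S := mem_image_of_mem _ (hM'M hm)
    exact hQs.eq_of_memSquare _ (hsq _ hmS) Q hQ m.2 (hw m (hM'M hm) ▸ hmem _ hmS) hmQ

/-- Theorem: the shadow property for one set of squares.
If all sources of `M` lie on the top row of the ℓ×ℓ grid, `Qs` is a `d`-canonical family of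
squares avoiding the top row, and `Mhat ⊆ M` is routable via node-disjoint paths with every
destination lying in a square of `Qs`, then some `Mhat' ⊆ Mhat` with
`|Mhat'| ≥ |Mhat| / (log₂ n)⁶` is such that every square of `Qs` has the 1-shadow property
with respect to `Mhat'`. -/
theorem statement0
    (ℓ n : ℕ) (hn : n = ℓ * ℓ) (hlog : (2 : ℝ) ^ (27 : ℕ) ≤ lg n)
    (M : Finset DPair) (hsrc : ∀ m ∈ M, OnTopRow ℓ m.1)
    (d : ℕ) (hd : 1 ≤ d)
    (Qs : Finset SquareSpec) (hcan : IsCanonicalSquares ℓ d Qs)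
    (hno : ∀ Q ∈ Qs, (1 : ℕ) ∉ Q.1)
    (Mhat : Finset DPair) (hsub : Mhat ⊆ M)
    (hroute : NodeDisjointRoutable (gridG ℓ) Mhat)
    (hdest : ∀ m ∈ Mhat, ∃ Q ∈ Qs, memSquare m.2 Q) :
    ∃ Mhat' ⊆ Mhat, (Mhat.card : ℝ) / (lg n) ^ 6 ≤ (Mhat'.card : ℝ) ∧
      ∀ Q ∈ Qs, HasShadowProp 1 d Mhat' Q := by
  subst hn
  obtain ⟨M', hM', hcard, hshadow⟩ := statement0_general hcan.isDisjointRectangles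
    (fun m hm => hsrc m (hsub hm)) hroute hdest
  exact ⟨M', hM', div_lg_pow_le hlog hcard, hshadow⟩
end

section
/- Let G be the ℓ×ℓ grid with n = ℓ² vertices, log₂ n ≥ 2²⁷, η = 2^⌈√(log₂ n)⌉, ρ a positive integer with ρ ≤ √(log₂ n), and d_h = η^{ρ−h+3}. Let H̃ = (Q₁,…,Q_ρ) be a hierarchical system of squares of G disjoint from the top row R*, where R* is restricted to its first ℓ' vertices for some multiple ℓ' of d₁ = η^{ρ+2}. Let OPT > 0 with d₁ ≤ OPT/2^{11√(log₂ n)·log₂ log₂ n}. Suppose M̃* is a set of demand pairs with distinct sources, all lying on R*, whose destinations all belong to H̃, such that all demand pairs of M̃* can be simultaneously routed via node-disjoint paths in G, every square of H̃ has the (1/η²)-shadow property with respect to M̃*, and |M̃*| ≥ OPT/2^{8√(log₂ n)·log₂ log₂ n}. Then there exist a sequence L = (ℓ₁,…,ℓ_ρ) of integers with ℓ₁ > ℓ₂ > … > ℓ_ρ, each an integral power of η, and a subset M̃** ⊆ M̃* such that |M̃**| ≥ OPT/2^{10√(log₂ n)·log₂ log₂ n} and M̃** is compatible with L. -/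
/-!
Only the columns of the sources matter. Shift them to start at `0`, so that the interval of length
`η ^ k` containing `x` is the fibre of `x ↦ x / η ^ k`; the intervals of all these lengths form an
`η`-ary tree, of depth `K = ⌈√(log₂ n)⌉` since `ℓ ≤ η ^ K`.

The sequence `L` is built from the shortest length `ℓ_ρ` upwards. At each level whole intervals are
kept or dropped, so that the levels already treated stay compatible. For one level with parameter
`D = d_h`, call an interval heavy if it has more than `D / 4` sources, tiny if it has fewer than
`D / (16 η)`, and good otherwise. The intervals of the previous level have at most `D / (4 η)`
sources, so the next longer ones are not heavy, while the whole row is heavy. In passing from one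
length to the next:

* the tiny children of an interval hold together at most `D / 16` sources;
* hence a heavy interval without heavy children has at least `3 D / 16` sources in good children, so
  the number of heavy intervals grows by at most `16 / (3 D)` times the number of good sources;
* the number of sources in heavy intervals grows by at most the number of good sources plus `D / 16`
  for each heavy interval of the new length.

If every length had at most `g` good sources, then after `j` steps at most `j (j + 1) g` sources
would be in heavy intervals. As all sources are at the end, some length has at least a `1 / K ^ 2`
fraction of the sources in good intervals; these are kept. After all `ρ` levels the loss is at most
`K ^ (2 ρ) ≤ (log₂ n) ^ (2 √(log₂ n)) = 2 ^ (2 √(log₂ n) log₂ log₂ n)`.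
-/

open Finset

/-- A hierarchical system of squares `Qs 1, …, Qs ρ`: level `h` is a `d_h`-canonical family
of squares (with `d_h = η^(ρ-h+3)`), and every level-`h` square is contained in a
level-`(h-1)` square. -/
def IsHierSquares (W η ρ : ℕ) (Qs : ℕ → Finset SquareSpec) : Prop :=
  (∀ h, 1 ≤ h → h ≤ ρ → IsCanonicalSquares W (η ^ (ρ - h + 3)) (Qs h)) ∧
    ∀ h, 1 < h → h ≤ ρ → ∀ Q ∈ Qs h, ∃ Q' ∈ Qs (h - 1), Q.1 ⊆ Q'.1 ∧ Q.2 ⊆ Q'.2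

/-- `I` is an interval of the level-`h` decomposition of the first `W` vertices of the top
row into consecutive intervals of exactly `lh` vertices each (the last possibly shorter). -/
def IsLevelInterval (W lh : ℕ) (I : Finset ℕ) : Prop :=
  ∃ k : ℕ, k * lh < W ∧ I = Finset.Icc (k * lh + 1) (min ((k + 1) * lh) W)

/-- The set `M` of demand pairs is compatible with the sequence `L = (ℓ₁,…,ℓ_ρ)`:
for every level `h` and every level-`h` interval `I` of the `L`-hierarchical decomposition
of (the first `W` vertices of) the top row, either `I` contains no source of `M`, or
`d_h/(16η) ≤ |I ∩ S(M)| ≤ d_h/4`. -/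
def CompatibleWith (W ρ η : ℕ) (L : ℕ → ℕ) (M : Finset DPair) : Prop :=
  ∀ h, 1 ≤ h → h ≤ ρ → ∀ I, IsLevelInterval W (L h) I →
    (∀ m ∈ M, m.1.2 ∉ I) ∨
    ((η : ℝ) ^ (ρ - h + 3) / (16 * η) ≤ ((M.filter (fun m => m.1.2 ∈ I)).card : ℝ) ∧
      ((M.filter (fun m => m.1.2 ∈ I)).card : ℝ) ≤ (η : ℝ) ^ (ρ - h + 3) / 4)

/-! ### Blocks of a labelling -/

section Blocks

variable {α β γ : Type*}

/-- `M'` is obtained from `M` by keeping some blocks entirely and dropping the others, where a block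
of `M` is a fibre of the labelling `c`. -/
def IsBlockUnion (c : α → β) (M' M : Finset α) : Prop :=
  M' ⊆ M ∧ ∀ x ∈ M', ∀ y ∈ M, c y = c x → y ∈ M'

lemma IsBlockUnion.of_comp {c : α → β} {g : β → γ} {M M' : Finset α}
    (h : IsBlockUnion (g ∘ c) M' M) : IsBlockUnion c M' M :=
  ⟨h.1, fun x hx y hy hyx => h.2 x hx y hy (congrArg g hyx)⟩

variable [DecidableEq β]

/-- The block with label `b` of the partition of `M` into the fibres of the labelling `c`. -/
def block (c : α → β) (M : Finset α) (b : β) : Finset α := {x ∈ M | c x = b}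

/-- The points of `M` in heavy blocks, those with more than `D / 4` points. -/
def heavyPoints (c : α → β) (D : ℕ) (M : Finset α) : Finset α :=
  {x ∈ M | D < 4 * #(block c M (c x))}

/-- The labels of the heavy blocks. -/
def heavyLabels (c : α → β) (D : ℕ) (M : Finset α) : Finset β := (heavyPoints c D M).image c

/-- The points of `M` in tiny blocks, those with fewer than `D / (16 η)` points. -/
def tinyPoints (c : α → β) (η D : ℕ) (M : Finset α) : Finset α :=
  {x ∈ M | 16 * η * #(block c M (c x)) < D}

/-- The points of `M` in good blocks, those that are neither heavy nor tiny. -/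
def goodPoints (c : α → β) (η D : ℕ) (M : Finset α) : Finset α :=
  {x ∈ M | D ≤ 16 * η * #(block c M (c x)) ∧ 4 * #(block c M (c x)) ≤ D}

/-- Compatibility of `M` with one partition: every nonempty block has at least `D / (16 η)` and at
most `D / 4` points. -/
def IsBalanced (c : α → β) (η D : ℕ) (M : Finset α) : Prop :=
  ∀ x ∈ M, D ≤ 16 * η * #(block c M (c x)) ∧ 4 * #(block c M (c x)) ≤ D

variable [DecidableEq γ] {c : α → β} {g : β → γ} {η D : ℕ} {M M' : Finset α}

lemma IsBlockUnion.block_eq (h : IsBlockUnion c M' M) {x : α} (hx : x ∈ M') :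
    block c M' (c x) = block c M (c x) := by
  ext y
  simp only [block, mem_filter]
  exact ⟨fun hy => ⟨h.1 hy.1, hy.2⟩, fun hy => ⟨h.2 x hx y hy.1 hy.2, hy.2⟩⟩

lemma IsBalanced.of_isBlockUnion (hM : IsBalanced c η D M) (h : IsBlockUnion c M' M) :
    IsBalanced c η D M' := fun x hx => by
  rw [h.block_eq hx]
  exact hM x (h.1 hx)

lemma isBlockUnion_goodPoints : IsBlockUnion c (goodPoints c η D M) M := by
  refine ⟨filter_subset _ _, fun x hx y hy hyx => ?_⟩
  rw [goodPoints, mem_filter] at hx ⊢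
  exact ⟨hy, hyx ▸ hx.2⟩

lemma isBalanced_goodPoints : IsBalanced c η D (goodPoints c η D M) := fun x hx => by
  rw [isBlockUnion_goodPoints.block_eq hx]
  exact (mem_filter.1 hx).2

lemma mem_heavyPoints_or_mem_goodPoints_or_mem_tinyPoints (c : α → β) (η D : ℕ) {x : α}
    (hx : x ∈ M) : x ∈ heavyPoints c D M ∨ x ∈ goodPoints c η D M ∨ x ∈ tinyPoints c η D M := by
  simp only [heavyPoints, goodPoints, tinyPoints, mem_filter, hx, true_and]
  omega

/-! ### Passing to a coarser partition -/

lemma card_block_comp_le_mul {n : ℕ} {p : γ} (hg : (g ⁻¹' {p}).encard ≤ η)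
    (hn : ∀ x ∈ M, #(block c M (c x)) ≤ n) : #(block (g ∘ c) M p) ≤ n * η := by
  have hlabels : #((block (g ∘ c) M p).image c) ≤ η := by
    have hsub : (((block (g ∘ c) M p).image c : Finset β) : Set β) ⊆ g ⁻¹' {p} := by
      intro b hb
      obtain ⟨x, hx, rfl⟩ := mem_image.1 hb
      exact (mem_filter.1 hx).2
    exact_mod_cast (Set.encard_coe_eq_coe_finsetCard _ ▸ Set.encard_le_encard hsub).trans hg
  calc #(block (g ∘ c) M p) ≤ n * #((block (g ∘ c) M p).image c) := by
        refine card_le_mul_card_image _ n fun b hb => ?_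
        obtain ⟨x, hx, rfl⟩ := mem_image.1 hb
        exact (card_le_card (filter_subset_filter _ (filter_subset _ _))).trans
          (hn x (mem_filter.1 hx).1)
    _ ≤ n * η := Nat.mul_le_mul_left n hlabels

lemma sixteen_mul_card_block_comp_tinyPoints_le (hη : 0 < η) {p : γ}
    (hg : (g ⁻¹' {p}).encard ≤ η) :
    16 * #(block (g ∘ c) (tinyPoints c η D M) p) ≤ D := by
  have htiny : ∀ x ∈ tinyPoints c η D M,
      #(block c (tinyPoints c η D M) (c x)) ≤ D / (16 * η) := by
    intro x hx
    rw [Nat.le_div_iff_mul_le (by positivity), mul_comm]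
    refine le_trans ?_ (mem_filter.1 hx).2.le
    exact Nat.mul_le_mul_left _ (card_le_card (filter_subset_filter _ (filter_subset _ _)))
  calc 16 * #(block (g ∘ c) (tinyPoints c η D M) p)
      ≤ 16 * (D / (16 * η) * η) := Nat.mul_le_mul_left _ (card_block_comp_le_mul hg htiny)
    _ = 16 * η * (D / (16 * η)) := by ring
    _ ≤ D := Nat.mul_div_le _ _

lemma card_heavyPoints_comp_le (hη : 0 < η) (hg : ∀ p, (g ⁻¹' {p}).encard ≤ η) :
    16 * #(heavyPoints (g ∘ c) D M) ≤ 16 * #(heavyPoints c D M) + 16 * #(goodPoints c η D M) +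
      D * #(heavyLabels (g ∘ c) D M) := by
  classical
  set T := heavyPoints (g ∘ c) D M ∩ tinyPoints c η D M
  have hcover : heavyPoints (g ∘ c) D M ⊆ heavyPoints c D M ∪ goodPoints c η D M ∪ T := by
    intro x hx
    simp only [mem_union, T, mem_inter, hx, true_and, or_assoc]
    exact mem_heavyPoints_or_mem_goodPoints_or_mem_tinyPoints c η D (mem_filter.1 hx).1
  have hT : #T ≤ D / 16 * #(heavyLabels (g ∘ c) D M) := by
    refine card_le_mul_card_image_of_maps_to (f := g ∘ c)
      (fun x hx => mem_image_of_mem _ (mem_inter.1 hx).1) _ fun p _ => ?_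
    have htiny : #(block (g ∘ c) (tinyPoints c η D M) p) ≤ D / 16 := by
      have := sixteen_mul_card_block_comp_tinyPoints_le (c := c) (D := D) (M := M) hη (hg p)
      omega
    exact (card_le_card (filter_subset_filter _ inter_subset_right)).trans htiny
  calc 16 * #(heavyPoints (g ∘ c) D M)
      ≤ 16 * (#(heavyPoints c D M) + #(goodPoints c η D M) + #T) := by
        grw [card_le_card hcover, card_union_le, card_union_le]
    _ ≤ 16 * (#(heavyPoints c D M) + #(goodPoints c η D M) +
          D / 16 * #(heavyLabels (g ∘ c) D M)) := by gcongr
    _ = 16 * #(heavyPoints c D M) + 16 * #(goodPoints c η D M) +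
          16 * (D / 16) * #(heavyLabels (g ∘ c) D M) := by ring
    _ ≤ _ := by grw [Nat.mul_div_le]

lemma three_mul_le_card_block_goodPoints (hη : 0 < η) {p : γ} (hg : (g ⁻¹' {p}).encard ≤ η)
    (hp : p ∈ heavyLabels (g ∘ c) D M) (hnew : p ∉ (heavyLabels c D M).image g) :
    3 * D ≤ 16 * #(block (g ∘ c) (goodPoints c η D M) p) := by
  classical
  obtain ⟨x, hx, rfl⟩ := mem_image.1 hp
  have hheavy : D < 4 * #(block (g ∘ c) M ((g ∘ c) x)) := (mem_filter.1 hx).2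
  have hcover : block (g ∘ c) M ((g ∘ c) x) ⊆
      block (g ∘ c) (goodPoints c η D M) ((g ∘ c) x) ∪
        block (g ∘ c) (tinyPoints c η D M) ((g ∘ c) x) := by
    intro y hy
    obtain ⟨hyM, hyx⟩ := mem_filter.1 hy
    have hlight : y ∉ heavyPoints c D M := fun h =>
      hnew (hyx ▸ mem_image_of_mem g (mem_image_of_mem c h))
    simpa only [block, mem_union, mem_filter, hyx, and_true] using
      (mem_heavyPoints_or_mem_goodPoints_or_mem_tinyPoints c η D hyM).resolve_left hlight
  have hcard := (card_le_card hcover).trans (card_union_le _ _)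
  have := sixteen_mul_card_block_comp_tinyPoints_le (c := c) (D := D) (M := M) hη hg
  omega

lemma card_heavyLabels_comp_le (hη : 0 < η) (hg : ∀ p, (g ⁻¹' {p}).encard ≤ η) :
    3 * D * #(heavyLabels (g ∘ c) D M) ≤
      3 * D * #(heavyLabels c D M) + 16 * #(goodPoints c η D M) := by
  set old := (heavyLabels c D M).image g
  set new := heavyLabels (g ∘ c) D M \ old
  have hcard : #(heavyLabels (g ∘ c) D M) ≤ #(heavyLabels c D M) + #new := by
    grw [← card_image_le (f := g) (s := heavyLabels c D M), ← card_union_le,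
      union_sdiff_self_eq_union]
    exact card_le_card subset_union_right
  have hnew : 3 * D * #new ≤ 16 * #(goodPoints c η D M) := by
    calc 3 * D * #new = ∑ _p ∈ new, 3 * D := by rw [sum_const, smul_eq_mul, mul_comm]
      _ ≤ ∑ p ∈ new, 16 * #(block (g ∘ c) (goodPoints c η D M) p) :=
          sum_le_sum fun p hp => three_mul_le_card_block_goodPoints hη (hg p)
            (mem_sdiff.1 hp).1 (mem_sdiff.1 hp).2
      _ = 16 * #{x ∈ goodPoints c η D M | (g ∘ c) x ∈ new} := by
          rw [← mul_sum, ← sum_card_fiberwise_eq_card_filter]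
          rfl
      _ ≤ 16 * #(goodPoints c η D M) := Nat.mul_le_mul_left _ (card_filter_le _ _)
  grw [hcard, mul_add, hnew]

end Blocks

/-! ### Hierarchies of partitions -/

section Hierarchy

variable {α β : Type*} {c : ℕ → α → β} {g : β → β}

lemma exists_eq_comp_of_le (hc : ∀ k, c (k + 1) = g ∘ c k) {k k' : ℕ} (h : k ≤ k') :
    ∃ f : β → β, c k' = f ∘ c k := by
  induction h with
  | refl => exact ⟨id, rfl⟩
  | step _ ih =>
    obtain ⟨f, hf⟩ := ih
    exact ⟨g ∘ f, by rw [hc, hf, Function.comp_assoc]⟩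

variable [DecidableEq β] {η D K : ℕ} {M : Finset α}

lemma card_heavyPoints_le_of_card_goodPoints_le (hη : 0 < η) (hc : ∀ k, c (k + 1) = g ∘ c k)
    (hg : ∀ p, (g ⁻¹' {p}).encard ≤ η) (hlight : heavyPoints (c 0) D M = ∅) {m : ℕ} (j : ℕ)
    (hm : ∀ k < j, #(goodPoints (c k) η D M) ≤ m) :
    3 * D * #(heavyLabels (c j) D M) ≤ 16 * j * m ∧
      #(heavyPoints (c j) D M) ≤ j * (j + 1) * m := by
  induction j with
  | zero => simp [heavyLabels, hlight]
  | succ j ih =>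
    obtain ⟨ih_labels, ih_points⟩ := ih fun k hk => hm k (by omega)
    have hlabels := card_heavyLabels_comp_le (c := c j) (D := D) (M := M) hη hg
    have hpoints := card_heavyPoints_comp_le (c := c j) (D := D) (M := M) hη hg
    have hgood := hm j (by omega)
    rw [← hc] at hlabels hpoints
    constructor <;> nlinarith

lemma exists_card_le_mul_card_goodPoints (hη : 0 < η) (hc : ∀ k, c (k + 1) = g ∘ c k)
    (hg : ∀ p, (g ⁻¹' {p}).encard ≤ η) (hlight : heavyPoints (c 0) D M = ∅) {j : ℕ}
    (hheavy : heavyPoints (c j) D M = M) :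
    ∃ k, #M ≤ j * (j + 1) * #(goodPoints (c k) η D M) := by
  obtain ⟨k, -, hmax⟩ := exists_max_image (range (j + 1)) (fun k => #(goodPoints (c k) η D M))
    nonempty_range_add_one
  have hbound := card_heavyPoints_le_of_card_goodPoints_le hη hc hg hlight j
    fun i hi => hmax i (mem_range.2 (by omega))
  exact ⟨k, (congrArg card hheavy).ge.trans hbound.2⟩

lemma exists_isBalanced_scale (hη : 0 < η) (hc : ∀ k, c (k + 1) = g ∘ c k)
    (hg : ∀ p, (g ⁻¹' {p}).encard ≤ η) (hroot : ∀ x ∈ M, ∀ y ∈ M, c K x = c K y) {k₀ : ℕ}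
    (hblock : ∀ x ∈ M, 4 * η * #(block (c k₀) M (c k₀ x)) ≤ D) (hcard : D < 4 * #M) :
    ∃ k, k₀ < k ∧ ∃ M', IsBlockUnion (c k) M' M ∧ #M ≤ K ^ 2 * #M' ∧ IsBalanced (c k) η D M' := by
  have hlight : heavyPoints (c (k₀ + 1)) D M = ∅ := by
    refine filter_eq_empty_iff.2 fun x _ => not_lt.2 ?_
    have hquarter : ∀ y ∈ M, #(block (c k₀) M (c k₀ y)) ≤ D / (4 * η) := fun y hy => by
      rw [Nat.le_div_iff_mul_le (by positivity), mul_comm]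
      exact hblock y hy
    calc 4 * #(block (c (k₀ + 1)) M (c (k₀ + 1) x)) ≤ 4 * (D / (4 * η) * η) := by
          rw [hc]
          exact Nat.mul_le_mul_left _ (card_block_comp_le_mul (hg _) hquarter)
      _ = 4 * η * (D / (4 * η)) := by ring
      _ ≤ D := Nat.mul_div_le _ _
  have hheavy : heavyPoints (c (k₀ + 1 + (K - 1))) D M = M := by
    obtain ⟨f, hf⟩ := exists_eq_comp_of_le hc (show K ≤ k₀ + 1 + (K - 1) by omega)
    refine filter_true_of_mem fun x hx => ?_
    have hone : block (c (k₀ + 1 + (K - 1))) M (c (k₀ + 1 + (K - 1)) x) = M :=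
      filter_true_of_mem fun y hy => by rw [hf, Function.comp, Function.comp, hroot y hy x hx]
    rwa [hone]
  obtain ⟨k, hk⟩ := exists_card_le_mul_card_goodPoints (c := fun k => c (k₀ + 1 + k)) hη
    (fun k => hc _) hg hlight hheavy
  refine ⟨k₀ + 1 + k, by omega, _, isBlockUnion_goodPoints, hk.trans ?_, isBalanced_goodPoints⟩
  have hK : (K - 1) * (K - 1 + 1) ≤ K ^ 2 := by
    rcases K with _ | K
    · simp
    · rw [Nat.add_sub_cancel, sq]
      gcongr
      omega
  exact Nat.mul_le_mul_right _ hK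

lemma strictMonoOn_update_Iic_succ {e : ℕ → ℕ} {j k : ℕ} (he : StrictMonoOn e (Set.Iic j))
    (hk : e j < k) : StrictMonoOn (Function.update e (j + 1) k) (Set.Iic (j + 1)) := by
  refine strictMonoOn_Iic_of_lt_succ fun t ht => ?_
  rw [Nat.succ_eq_succ, Function.update_of_ne ht.ne]
  rcases (Nat.lt_succ_iff.1 ht).lt_or_eq with h | rfl
  · rw [Function.update_of_ne (by simpa using h.ne)]
    exact he h.le (Nat.succ_le_of_lt h) t.lt_succ_self
  · simpa using hk

/-- The bottom `j` levels of the construction are finished: the partitions `c (e 1), …, c (e j)` of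
`M` are compatible with the respective parameters. Levels are numbered from the bottom, so that
level `t` has parameter `η ^ (t + 2)`; level `0` is the starting point `c (e 0)`. The bound on the
blocks of the topmost level is what the next level up needs. -/
structure IsBalancedUpTo (c : ℕ → α → β) (η : ℕ) (e : ℕ → ℕ) (j : ℕ) (M : Finset α) : Prop where
  strictMonoOn : StrictMonoOn e (Set.Iic j)
  isBalanced : ∀ t, 1 ≤ t → t ≤ j → IsBalanced (c (e t)) η (η ^ (t + 2)) M
  four_mul_card_block_le : ∀ x ∈ M, 4 * #(block (c (e j)) M (c (e j) x)) ≤ η ^ (j + 2)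

lemma isBalancedUpTo_zero (hη : 2 ≤ η) (hinj : Set.InjOn (c 0) M) :
    IsBalancedUpTo c η id 0 M where
  strictMonoOn := strictMono_id.strictMonoOn _
  isBalanced := by omega
  four_mul_card_block_le x _ := by
    have hsingle : #(block (c 0) M (c 0 x)) ≤ 1 := card_le_one.2 fun y hy z hz => by
      rw [block, mem_filter] at hy hz
      exact hinj hy.1 hz.1 (hy.2.trans hz.2.symm)
    calc 4 * #(block (c 0) M (c 0 x)) ≤ 2 ^ 2 := by omega
      _ ≤ η ^ (0 + 2) := Nat.pow_le_pow_left hη 2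

lemma IsBalancedUpTo.update (hc : ∀ k, c (k + 1) = g ∘ c k) {e : ℕ → ℕ} {j k : ℕ}
    {M' : Finset α} (h : IsBalancedUpTo c η e j M) (hk : e j < k) (hM' : IsBlockUnion (c k) M' M)
    (hbal : IsBalanced (c k) η (η ^ (j + 1 + 2)) M') :
    IsBalancedUpTo c η (Function.update e (j + 1) k) (j + 1) M' where
  strictMonoOn := strictMonoOn_update_Iic_succ h.strictMonoOn hk
  isBalanced t ht1 ht := by
    rcases ht.lt_or_eq with hlt | rfl
    · rw [Function.update_of_ne hlt.ne]
      have htj : t ≤ j := Nat.lt_succ_iff.1 hlt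
      obtain ⟨f, hf⟩ := exists_eq_comp_of_le hc
        ((h.strictMonoOn.monotoneOn htj Set.self_mem_Iic htj).trans hk.le)
      exact (h.isBalanced t ht1 htj).of_isBlockUnion (hf ▸ hM').of_comp
    · rwa [Function.update_self]
  four_mul_card_block_le x hx := by
    rw [Function.update_self]
    exact (hbal x hx).2

lemma IsBalancedUpTo.exists_succ (hη : 0 < η) (hc : ∀ k, c (k + 1) = g ∘ c k)
    (hg : ∀ p, (g ⁻¹' {p}).encard ≤ η) (hroot : ∀ x ∈ M, ∀ y ∈ M, c K x = c K y) {e : ℕ → ℕ}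
    {j : ℕ} (h : IsBalancedUpTo c η e j M) (hcard : η ^ (j + 1 + 2) ≤ #M) :
    ∃ e', ∃ M' ⊆ M, #M ≤ K ^ 2 * #M' ∧ IsBalancedUpTo c η e' (j + 1) M' := by
  have hpos : 0 < η ^ (j + 1 + 2) := by positivity
  have hblock : ∀ x ∈ M, 4 * η * #(block (c (e j)) M (c (e j) x)) ≤ η ^ (j + 1 + 2) := fun x hx =>
    calc 4 * η * #(block (c (e j)) M (c (e j) x))
        = η * (4 * #(block (c (e j)) M (c (e j) x))) := by ring
      _ ≤ η * η ^ (j + 2) := Nat.mul_le_mul_left _ (h.four_mul_card_block_le x hx)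
      _ = η ^ (j + 1 + 2) := by ring
  obtain ⟨k, hk, M', hM', hcard', hbal⟩ :=
    exists_isBalanced_scale hη hc hg hroot hblock (by omega)
  exact ⟨_, M', hM'.1, hcard', h.update hc hk hM' hbal⟩

lemma exists_isBalancedUpTo (hη : 2 ≤ η) (hc : ∀ k, c (k + 1) = g ∘ c k)
    (hg : ∀ p, (g ⁻¹' {p}).encard ≤ η) (hK : 0 < K) (hroot : ∀ x ∈ M, ∀ y ∈ M, c K x = c K y)
    (hinj : Set.InjOn (c 0) M) (j : ℕ) (hcard : η ^ (j + 2) * (K ^ 2) ^ j ≤ #M) :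
    ∃ e, ∃ M' ⊆ M, #M ≤ (K ^ 2) ^ j * #M' ∧ IsBalancedUpTo c η e j M' := by
  induction j with
  | zero => exact ⟨id, M, Subset.rfl, by simp, isBalancedUpTo_zero hη hinj⟩
  | succ j ih =>
    have hη0 : 0 < η := by omega
    have hK2 : 0 < K ^ 2 := by positivity
    obtain ⟨e, M₁, hM₁, hcard₁, h₁⟩ := ih (le_trans (by gcongr <;> omega) hcard)
    have hlarge : η ^ (j + 1 + 2) ≤ #M₁ := by
      refine Nat.le_of_mul_le_mul_left (c := (K ^ 2) ^ j) ?_ (by positivity)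
      calc (K ^ 2) ^ j * η ^ (j + 1 + 2) ≤ η ^ (j + 1 + 2) * (K ^ 2) ^ (j + 1) := by
            rw [mul_comm]
            gcongr
            omega
        _ ≤ (K ^ 2) ^ j * #M₁ := hcard.trans hcard₁
    obtain ⟨e', M₂, hM₂, hcard₂, h₂⟩ := h₁.exists_succ hη0 hc hg
      (fun x hx y hy => hroot x (hM₁ hx) y (hM₁ hy)) hlarge
    refine ⟨e', M₂, hM₂.trans hM₁, ?_, h₂⟩
    calc #M ≤ (K ^ 2) ^ j * (K ^ 2 * #M₂) := hcard₁.trans (Nat.mul_le_mul_left _ hcard₂)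
      _ = (K ^ 2) ^ (j + 1) * #M₂ := by ring

end Hierarchy

/-! ### Intervals of the top row -/

/-- Index of the interval containing the source of `m` when the top row is cut into intervals of
`w` vertices. Columns start at `1`, indices at `0`. -/
def intervalIndex (w : ℕ) (m : DPair) : ℕ := (m.1.2 - 1) / w

lemma encard_preimage_div_singleton_le {η : ℕ} (hη : 0 < η) (p : ℕ) :
    ((· / η) ⁻¹' {p} : Set ℕ).encard ≤ η := by
  have hsub : ((· / η) ⁻¹' {p} : Set ℕ) ⊆ Ico (p * η) (p * η + η) := fun a ha => by
    have := (Nat.div_eq_iff hη).1 ha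
    rw [coe_Ico, Set.mem_Ico]
    omega
  exact (Set.encard_le_encard hsub).trans
    (by rw [Set.encard_coe_eq_coe_finsetCard, Nat.card_Ico, Nat.add_sub_cancel_left])

lemma intervalIndex_pow_succ (η k : ℕ) :
    intervalIndex (η ^ (k + 1)) = (· / η) ∘ intervalIndex (η ^ k) := by
  funext m
  simp only [intervalIndex, Function.comp, Nat.div_div_eq_div_mul, pow_succ]

lemma OnTopRow.mem_Icc_iff_intervalIndex_eq {W w : ℕ} {m : DPair} (hm : OnTopRow W m.1)
    (hw : 0 < w) (k : ℕ) :
    m.1.2 ∈ Icc (k * w + 1) (min ((k + 1) * w) W) ↔ intervalIndex w m = k := by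
  obtain ⟨-, hpos, hle⟩ := hm
  rw [intervalIndex, mem_Icc, le_min_iff, Nat.div_eq_iff hw, add_mul]
  omega

lemma IsBalanced.levelInterval {W w η D : ℕ} {M : Finset DPair} {I : Finset ℕ} (hw : 0 < w)
    (hη : 0 < η) (hM : ∀ m ∈ M, OnTopRow W m.1) (hbal : IsBalanced (intervalIndex w) η D M)
    (hI : IsLevelInterval W w I) :
    (∀ m ∈ M, m.1.2 ∉ I) ∨
      ((D : ℝ) / (16 * η) ≤ (#{m ∈ M | m.1.2 ∈ I} : ℝ) ∧
        (#{m ∈ M | m.1.2 ∈ I} : ℝ) ≤ (D : ℝ) / 4) := by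
  obtain ⟨k, -, rfl⟩ := hI
  rw [filter_congr fun m hm => (hM m hm).mem_Icc_iff_intervalIndex_eq hw k]
  refine or_iff_not_imp_left.2 fun hne => ?_
  push Not at hne
  obtain ⟨m, hm, hmI⟩ := hne
  obtain rfl := ((hM m hm).mem_Icc_iff_intervalIndex_eq hw k).1 hmI
  obtain ⟨hlower, hupper⟩ := hbal m hm
  rw [div_le_iff₀' (by positivity), le_div_iff₀' (by norm_num)]
  exact ⟨by exact_mod_cast hlower, by exact_mod_cast hupper⟩

theorem exists_compatibleWith_of_le_pow {W η ρ K : ℕ} {M : Finset DPair} (hη : 2 ≤ η) (hK : 0 < K)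
    (hW : W ≤ η ^ K) (hM : ∀ m ∈ M, OnTopRow W m.1) (hds : DistinctSources M)
    (hcard : η ^ (ρ + 2) * (K ^ 2) ^ ρ ≤ #M) :
    ∃ L : ℕ → ℕ,
      (∀ h, 1 ≤ h → h ≤ ρ → ∃ k : ℕ, L h = η ^ k) ∧
      (∀ h h', 1 ≤ h → h < h' → h' ≤ ρ → L h' < L h) ∧
      ∃ M' ⊆ M, #M ≤ (K ^ 2) ^ ρ * #M' ∧ CompatibleWith W ρ η L M' := by
  have hη0 : 0 < η := by omega
  have hroot : ∀ m ∈ M, intervalIndex (η ^ K) m = 0 := fun m hm => by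
    obtain ⟨-, hpos, hle⟩ := hM m hm
    exact Nat.div_eq_of_lt (by omega)
  have hinj : Set.InjOn (intervalIndex (η ^ 0)) M := by
    intro a ha b hb hab
    obtain ⟨ha1, ha2, -⟩ := hM a ha
    obtain ⟨hb1, hb2, -⟩ := hM b hb
    simp only [intervalIndex, pow_zero, Nat.div_one] at hab
    exact hds a ha b hb (Prod.ext (ha1.trans hb1.symm) (by omega))
  obtain ⟨e, M', hM', hcard', he⟩ :=
    exists_isBalancedUpTo (c := fun k => intervalIndex (η ^ k)) hη (intervalIndex_pow_succ η)
      (encard_preimage_div_singleton_le hη0) hK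
      (fun x hx y hy => (hroot x hx).trans (hroot y hy).symm) hinj ρ hcard
  refine ⟨fun h => η ^ e (ρ - h + 1), fun h _ _ => ⟨_, rfl⟩, fun h h' h1 hlt h2 => ?_, M', hM',
    hcard', fun h h1 h2 I hI => ?_⟩
  · exact Nat.pow_lt_pow_right hη (he.strictMonoOn (Set.mem_Iic.2 (by omega))
      (Set.mem_Iic.2 (by omega)) (by omega))
  · have hlevel := (he.isBalanced (ρ - h + 1) (by omega) (by omega)).levelInterval
      (by positivity) hη0 (fun m hm => hM m (hM' hm)) hI
    rwa [show ρ - h + 1 + 2 = ρ - h + 3 by omega, Nat.cast_pow] at hlevel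

/-! ### The loss over all levels -/

lemma ceil_sqrt_le_self {x : ℝ} (hx : 2 ≤ x) : (⌈√x⌉₊ : ℝ) ≤ x := by
  have hsq : √x * √x = x := Real.mul_self_sqrt (by linarith)
  rcases le_total √x 2 with h | h
  · have : ⌈√x⌉₊ ≤ 2 := Nat.ceil_le.2 (by exact_mod_cast h)
    exact (by exact_mod_cast this : (⌈√x⌉₊ : ℝ) ≤ 2).trans hx
  · nlinarith [Nat.ceil_lt_add_one (Real.sqrt_nonneg x)]

lemma ceil_sqrt_sq_pow_le {x : ℝ} (hx : 2 ≤ x) {ρ : ℕ} (hρ : (ρ : ℝ) ≤ √x) :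
    ((⌈√x⌉₊ : ℝ) ^ 2) ^ ρ ≤ 2 ^ (2 * √x * Real.logb 2 x) := by
  have hlog : 0 ≤ Real.logb 2 x := Real.logb_nonneg (by norm_num) (by linarith)
  calc ((⌈√x⌉₊ : ℝ) ^ 2) ^ ρ ≤ (x ^ 2) ^ ρ := by gcongr; exact ceil_sqrt_le_self hx
    _ = 2 ^ (Real.logb 2 x * (2 * ρ)) := by
        rw [Real.rpow_mul (by norm_num), Real.rpow_logb (by norm_num) (by norm_num) (by linarith),
          ← pow_mul, ← Real.rpow_natCast]
        push_cast
        rfl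
    _ ≤ 2 ^ (Real.logb 2 x * (2 * √x)) := by gcongr; norm_num
    _ = 2 ^ (2 * √x * Real.logb 2 x) := by rw [mul_comm]

lemma le_two_pow_ceil_sqrt_lg_pow (n : ℕ) : n ≤ (2 ^ ⌈√(lg n)⌉₊) ^ ⌈√(lg n)⌉₊ := by
  rcases n.eq_zero_or_pos with rfl | hn
  · exact Nat.zero_le _
  have hlg : 0 ≤ lg n := Real.logb_nonneg (by norm_num) (by exact_mod_cast hn)
  have hexp : lg n ≤ (⌈√(lg n)⌉₊ * ⌈√(lg n)⌉₊ : ℕ) := by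
    calc lg n = √(lg n) * √(lg n) := (Real.mul_self_sqrt hlg).symm
      _ ≤ (⌈√(lg n)⌉₊ * ⌈√(lg n)⌉₊ : ℕ) := by
          push_cast
          gcongr <;> exact Nat.le_ceil _
  have hreal : (n : ℝ) ≤ 2 ^ (⌈√(lg n)⌉₊ * ⌈√(lg n)⌉₊) := by
    rw [← Real.rpow_natCast, ← Real.logb_le_iff_le_rpow (by norm_num) (by exact_mod_cast hn)]
    exact hexp
  rw [← pow_mul]
  exact_mod_cast hreal

theorem statement2_general {n η ρ W : ℕ} (hlog : 2 ≤ lg n) (hη : η = 2 ^ ⌈√(lg n)⌉₊)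
    (hρ : (ρ : ℝ) ≤ √(lg n)) (hW : W ≤ n) {OPT : ℝ}
    (hOPT : (η : ℝ) ^ (ρ + 2) ≤ OPT / 2 ^ (11 * √(lg n) * Real.logb 2 (lg n)))
    {M : Finset DPair} (hds : DistinctSources M) (hM : ∀ m ∈ M, OnTopRow W m.1)
    (hcard : OPT / 2 ^ (8 * √(lg n) * Real.logb 2 (lg n)) ≤ #M) :
    ∃ L : ℕ → ℕ,
      (∀ h, 1 ≤ h → h ≤ ρ → ∃ k : ℕ, L h = η ^ k) ∧
      (∀ h h', 1 ≤ h → h < h' → h' ≤ ρ → L h' < L h) ∧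
      ∃ M' ⊆ M,
        OPT / 2 ^ (10 * √(lg n) * Real.logb 2 (lg n)) ≤ #M' ∧ CompatibleWith W ρ η L M' := by
  set s := √(lg n)
  set A := Real.logb 2 (lg n)
  have hs : 0 < s := Real.sqrt_pos.2 (by linarith)
  have hA : 0 ≤ A := Real.logb_nonneg (by norm_num) (by linarith)
  have hK : 0 < ⌈s⌉₊ := Nat.ceil_pos.2 hs
  have hη2 : 2 ≤ η := hη ▸ Nat.le_self_pow hK.ne' 2
  have hOPT0 : 0 ≤ OPT := by
    have := (by positivity : (0 : ℝ) ≤ (η : ℝ) ^ (ρ + 2)).trans hOPT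
    rwa [le_div_iff₀ (by positivity), zero_mul] at this
  have hloss : ((⌈s⌉₊ : ℝ) ^ 2) ^ ρ ≤ 2 ^ (2 * s * A) := ceil_sqrt_sq_pow_le hlog hρ
  have hlarge : (η : ℝ) ^ (ρ + 2) * ((⌈s⌉₊ : ℝ) ^ 2) ^ ρ ≤ #M := by
    calc (η : ℝ) ^ (ρ + 2) * ((⌈s⌉₊ : ℝ) ^ 2) ^ ρ
        ≤ OPT / 2 ^ (11 * s * A) * 2 ^ (2 * s * A) := by gcongr
      _ = OPT / 2 ^ (9 * s * A) := by
          rw [show 11 * s * A = 9 * s * A + 2 * s * A by ring, Real.rpow_add (by norm_num)]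
          field_simp
      _ ≤ OPT / 2 ^ (8 * s * A) := by gcongr <;> norm_num
      _ ≤ #M := hcard
  obtain ⟨L, hpow, hanti, M', hM', hcard', hcompat⟩ := exists_compatibleWith_of_le_pow hη2 hK
    (hW.trans (hη ▸ le_two_pow_ceil_sqrt_lg_pow n)) hM hds (by exact_mod_cast hlarge)
  refine ⟨L, hpow, hanti, M', hM', ?_, hcompat⟩
  rw [show 10 * s * A = 8 * s * A + 2 * s * A by ring, Real.rpow_add (by norm_num), ← div_div,
    div_le_iff₀' (by positivity)]
  calc OPT / 2 ^ (8 * s * A) ≤ #M := hcard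
    _ ≤ ((⌈s⌉₊ : ℝ) ^ 2) ^ ρ * #M' := by exact_mod_cast hcard'
    _ ≤ 2 ^ (2 * s * A) * #M' := by gcongr

/-- Theorem: partition of the top row. -/
theorem statement2
    (ℓ n : ℕ) (hn : n = ℓ * ℓ) (hlog : (2 : ℝ) ^ (27 : ℕ) ≤ lg n)
    (η ρ : ℕ) (hη : η = 2 ^ ⌈Real.sqrt (lg n)⌉₊)
    (hρ : 1 ≤ ρ) (hρ' : (ρ : ℝ) ≤ Real.sqrt (lg n))
    (Qs : ℕ → Finset SquareSpec) (hH : IsHierSquares ℓ η ρ Qs)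
    (hdisj : ∀ h, 1 ≤ h → h ≤ ρ → ∀ Q ∈ Qs h, (1 : ℕ) ∉ Q.1)
    (ℓ' : ℕ) (hℓ'pos : 0 < ℓ') (hdvd : η ^ (ρ + 2) ∣ ℓ') (hℓ' : ℓ' ≤ ℓ)
    (OPT : ℕ) (hOPT : 0 < OPT)
    (hOPTd : ((η : ℝ) ^ (ρ + 2)) ≤
      (OPT : ℝ) / 2 ^ (11 * Real.sqrt (lg n) * Real.logb 2 (lg n)))
    (Ms : Finset DPair)
    (hds : DistinctSources Ms)
    (hsrc : ∀ m ∈ Ms, OnTopRow ℓ m.1 ∧ m.1.2 ≤ ℓ')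
    (hdest : ∀ m ∈ Ms, ∃ Q ∈ Qs ρ, memSquare m.2 Q)
    (hroute : NodeDisjointRoutable (gridG ℓ) Ms)
    (hshadow : ∀ h, 1 ≤ h → h ≤ ρ → ∀ Q ∈ Qs h,
      HasShadowProp (1 / (η : ℝ) ^ 2) (η ^ (ρ - h + 3)) Ms Q)
    (hcard : (OPT : ℝ) / 2 ^ (8 * Real.sqrt (lg n) * Real.logb 2 (lg n)) ≤ (Ms.card : ℝ)) :
    ∃ L : ℕ → ℕ,
      (∀ h, 1 ≤ h → h ≤ ρ → ∃ k : ℕ, L h = η ^ k) ∧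
      (∀ h h', 1 ≤ h → h < h' → h' ≤ ρ → L h' < L h) ∧
      ∃ Mss ⊆ Ms,
        (OPT : ℝ) / 2 ^ (10 * Real.sqrt (lg n) * Real.logb 2 (lg n)) ≤ (Mss.card : ℝ) ∧
        CompatibleWith ℓ' ρ η L Mss := by
  exact statement2_general (le_trans (by norm_num) hlog) hη hρ' (hn ▸ hℓ'.trans (Nat.le_mul_self ℓ))
    hOPTd hds (fun m hm => ⟨(hsrc m hm).1.1, (hsrc m hm).1.2.1, (hsrc m hm).2⟩) hcard
end

section
/- Let G be the ℓ×ℓ grid with top row R*, let η > 16 and d ≥ 1 be integers, let J be a partition of R* into consecutive intervals, and let M be a set of demand pairs with distinct sources, all lying on R*, such that every interval I ∈ J that contains at least one source of M satisfies |I ∩ S(M)| ≥ d/(16η). Let Q be a square sub-grid of G of side d that has the (1/η²)-shadow property with respect to M. Then the sources of all demand pairs of M whose destinations lie in Q are contained in the union of at most two intervals of J. -/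
/-!
An interval of `J` that contains the source of a pair with destination in `Q`, but contains neither
the leftmost nor the rightmost such source, lies entirely inside the shadow of `Q`. It would bring
at least `d / (16 * η)` sources into the shadow, more than the `d / η ^ 2` allowed since `η > 16`.
So the intervals of the leftmost and of the rightmost source cover all the others.
-/

open Finset

section OrdConnected

variable {α ι : Type*} [LinearOrder α] {p q : α}

lemma ordConnected_subset_Icc_of_notMem {I : Set α} (hI : I.OrdConnected) {x : α} (hx : x ∈ I)
    (hxpq : x ∈ Set.Icc p q) (hp : p ∉ I) (hq : q ∉ I) : I ⊆ Set.Icc p q := by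
  intro y hy
  constructor
  · by_contra! hyp
    exact hp (hI.out hy hx ⟨hyp.le, hxpq.1⟩)
  · by_contra! hqy
    exact hq (hI.out hx hy ⟨hxpq.2, hqy.le⟩)

lemma exists_subset_union_of_forall_not_subset_Icc {s : Set ι} {I : ι → Set α} {T : Set α}
    (hp : IsLeast T p) (hq : IsGreatest T q) (hconn : ∀ i ∈ s, (I i).OrdConnected)
    (hpart : ∀ x ∈ T, ∃! i, i ∈ s ∧ x ∈ I i)
    (hnot : ∀ i ∈ s, (I i ∩ T).Nonempty → ¬ I i ⊆ Set.Icc p q) :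
    ∃ i ∈ s, ∃ j ∈ s, T ⊆ I i ∪ I j := by
  obtain ⟨i, ⟨hi, -⟩, hi_unique⟩ := hpart p hp.1
  obtain ⟨j, ⟨hj, -⟩, hj_unique⟩ := hpart q hq.1
  refine ⟨i, hi, j, hj, fun x hx => ?_⟩
  obtain ⟨k, ⟨hk, hxk⟩, -⟩ := hpart x hx
  by_cases hpk : p ∈ I k
  · exact Or.inl (hi_unique k ⟨hk, hpk⟩ ▸ hxk)
  by_cases hqk : q ∈ I k
  · exact Or.inr (hj_unique k ⟨hk, hqk⟩ ▸ hxk)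
  exact absurd (ordConnected_subset_Icc_of_notMem (hconn k hk) hxk ⟨hp.2 hx, hq.2 hx⟩ hpk hqk)
    (hnot k hk ⟨x, hxk, hx⟩)

end OrdConnected

lemma IsIntervalIn.ordConnected {W : ℕ} {I : Finset ℕ} (hI : IsIntervalIn W I) :
    (I : Set ℕ).OrdConnected := by
  obtain ⟨a, b, -, -, -, rfl⟩ := hI
  rw [coe_Icc]
  exact Set.ordConnected_Icc

lemma one_div_sq_mul_lt_div_mul {K : Type*} [Field K] [LinearOrder K] [IsStrictOrderedRing K]
    {c η d : K} (hc : 0 < c) (hη : c < η) (hd : 0 < d) : 1 / η ^ 2 * d < d / (c * η) := by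
  have hη₀ : 0 < η := hc.trans hη
  have hmul : c * η < η ^ 2 := by
    rw [sq]
    exact mul_lt_mul_of_pos_right hη hη₀
  rw [one_div_mul_eq_div]
  exact div_lt_div_of_pos_left hd (mul_pos hc hη₀) hmul

section Shadow

variable {M : Finset DPair} {Q : SquareSpec}

/-- The columns of the sources of those pairs of `M` whose destination lies in `Q`. When all
sources lie on the top row, the shadow of `Q` runs from the least to the greatest of them. -/
def sourceColumns (M : Finset DPair) (Q : SquareSpec) : Finset ℕ :=
  {m ∈ M | memSquare m.2 Q}.image fun m => m.1.2

lemma mem_sourceColumns {x : ℕ} :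
    x ∈ sourceColumns M Q ↔ ∃ m ∈ M, memSquare m.2 Q ∧ m.1.2 = x := by
  simp only [sourceColumns, mem_image, mem_filter, and_assoc]

lemma card_filter_mem_le_shadowCount {I : Finset ℕ} {p q : ℕ} (hp : p ∈ sourceColumns M Q)
    (hq : q ∈ sourceColumns M Q) (hI : (I : Set ℕ) ⊆ Set.Icc p q) :
    #{m ∈ M | m.1.2 ∈ I} ≤ shadowCount M Q := by
  obtain ⟨m₁, hm₁, hm₁Q, rfl⟩ := mem_sourceColumns.1 hp
  obtain ⟨m₂, hm₂, hm₂Q, rfl⟩ := mem_sourceColumns.1 hq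
  exact card_le_card <| monotone_filter_right M fun m _ hmI =>
    ⟨m₁, hm₁, hm₁Q, m₂, hm₂, hm₂Q, hI hmI⟩

theorem statement3_general {J : Set (Finset ℕ)} {β : ℝ} {d : ℕ} (hJ : J.Nonempty)
    (hconn : ∀ I ∈ J, (I : Set ℕ).OrdConnected)
    (hpart : ∀ m ∈ M, memSquare m.2 Q → ∃! I, I ∈ J ∧ m.1.2 ∈ I)
    (hfill : ∀ I ∈ J, (∃ m ∈ M, m.1.2 ∈ I) → β * d < #{m ∈ M | m.1.2 ∈ I})
    (hshadow : HasShadowProp β d M Q) :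
    ∃ I₁ ∈ J, ∃ I₂ ∈ J, ∀ m ∈ M, memSquare m.2 Q → m.1.2 ∈ I₁ ∪ I₂ := by
  obtain hT | hT := (sourceColumns M Q).eq_empty_or_nonempty
  · obtain ⟨I, hI⟩ := hJ
    refine ⟨I, hI, I, hI, fun m hm hmQ => ?_⟩
    exact absurd (mem_sourceColumns.2 ⟨m, hm, hmQ, rfl⟩) (hT ▸ notMem_empty _)
  have hpart' : ∀ x ∈ sourceColumns M Q, ∃! I, I ∈ J ∧ x ∈ I := by
    intro x hx
    obtain ⟨m, hm, hmQ, rfl⟩ := mem_sourceColumns.1 hx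
    exact hpart m hm hmQ
  have hnot : ∀ I ∈ J, ((I : Set ℕ) ∩ sourceColumns M Q).Nonempty →
      ¬ (I : Set ℕ) ⊆ Set.Icc ((sourceColumns M Q).min' hT) ((sourceColumns M Q).max' hT) := by
    rintro I hI ⟨x, hxI, hx⟩ hsub
    obtain ⟨m, hm, -, rfl⟩ := mem_sourceColumns.1 hx
    have hcard : #{m ∈ M | m.1.2 ∈ I} ≤ shadowCount M Q :=
      card_filter_mem_le_shadowCount (min'_mem _ hT) (max'_mem _ hT) hsub
    exact (hfill I hI ⟨m, hm, hxI⟩).not_ge ((Nat.cast_le.2 hcard).trans hshadow)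
  obtain ⟨I₁, hI₁, I₂, hI₂, hcover⟩ := exists_subset_union_of_forall_not_subset_Icc
    (isLeast_min' _ hT) (isGreatest_max' _ hT) hconn hpart' hnot
  exact ⟨I₁, hI₁, I₂, hI₂, fun m hm hmQ =>
    mem_union.2 (hcover (mem_sourceColumns.2 ⟨m, hm, hmQ, rfl⟩))⟩

end Shadow

/-- Observation: squares spanning few intervals.
If `J` is a partition of the top row into consecutive intervals, each interval of `J`
containing a source of `M` contains at least `d/(16η)` sources, and a side-`d` square `Q`
has the `(1/η²)`-shadow property with respect to `M`, then the sources of all demand pairs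
of `M` whose destinations lie in `Q` are contained in at most two intervals of `J`. -/
theorem statement3
    (ℓ η d : ℕ) (hη : 16 < η) (hd : 1 ≤ d)
    (J : Finset (Finset ℕ))
    (hJint : ∀ I ∈ J, ∃ a b : ℕ, 1 ≤ a ∧ a ≤ b ∧ b ≤ ℓ ∧ I = Finset.Icc a b)
    (hJpart : ∀ x : ℕ, 1 ≤ x → x ≤ ℓ → ∃! I, I ∈ J ∧ x ∈ I)
    (M : Finset DPair) (hsrc : ∀ m ∈ M, OnTopRow ℓ m.1)
    (hds : DistinctSources M)
    (hfill : ∀ I ∈ J, (∃ m ∈ M, m.1.2 ∈ I) →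
      (d : ℝ) / (16 * η) ≤ ((M.filter (fun m => m.1.2 ∈ I)).card : ℝ))
    (Q : SquareSpec)
    (hQr : ∃ a b : ℕ, 1 ≤ a ∧ a ≤ b ∧ b ≤ ℓ ∧ Q.1 = Finset.Icc a b)
    (hQc : ∃ a b : ℕ, 1 ≤ a ∧ a ≤ b ∧ b ≤ ℓ ∧ Q.2 = Finset.Icc a b)
    (hQd : Q.1.card = d ∧ Q.2.card = d)
    (hshadow : HasShadowProp (1 / (η : ℝ) ^ 2) d M Q) :
    ∃ I₁ ∈ J, ∃ I₂ ∈ J, ∀ m ∈ M, memSquare m.2 Q → m.1.2 ∈ I₁ ∪ I₂ := by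
  have hJ : (J : Set (Finset ℕ)).Nonempty := by
    obtain ⟨a, b, ha, hab, hb, -⟩ := hQr
    exact (hJpart a ha (hab.trans hb)).exists.imp fun _ => And.left
  have hgap : 1 / (η : ℝ) ^ 2 * d < d / (16 * η) :=
    one_div_sq_mul_lt_div_mul (by norm_num) (by exact_mod_cast hη) (by exact_mod_cast hd)
  exact statement3_general hJ (fun I hI => IsIntervalIn.ordConnected (hJint I hI))
    (fun m hm _ => hJpart _ (hsrc m hm).2.1 (hsrc m hm).2.2)
    (fun I hI hmI => hgap.trans_le (hfill I hI hmI)) hshadow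
end
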